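/- Let Γ be a distance-regular graph with classical parameters (D, b, α, β), D ≥ 4, and intersection numbers a₁ = 0 and a₂ ≠ 0. Fix vertices x, y with ∂(x,y) = 3, set C = {z ∈ Γ₃(x) : B(x,z) = B(x,y)} and Δ = [x,C] = {v ∈ X : ∃ z ∈ C with ∂(x,v)+∂(v,z)=∂(x,z)}. Let x = x₀, x₁, x₂, x₃ be a sequence of vertices in Δ with ∂(x,x_j) = j and ∂(x_{j−1},x_j) = 1 for 1 ≤ j ≤ 3. Then for 0 ≤ i ≤ 2, if s is a neighbor of x_i with s ∉ Δ and z ∈ A(x_{i+1},s) (i.e., z is a neighbor of x_{i+1} with ∂(s,z) = 2), then z ∉ Δ. -/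

import Mathlib

/-!
Common definitions: distance-regular graphs (via an intersection-number function `p`),
classical parameters, and the sets `B(x,y)`, `A(x,y)`, `C(x,y)`.
The distance `∂` is `SimpleGraph.dist`.
-/

variable {V : Type*}

/-- `Γ` is distance-regular with intersection numbers `p h i j = p^h_{ij}`
(for indices up to the diameter `D`). -/
def SimpleGraph.IsDistRegularWith (G : SimpleGraph V) (D : ℕ) (p : ℕ → ℕ → ℕ → ℕ) : Prop :=
  ∀ h i j : ℕ, h ≤ D → i ≤ D → j ≤ D → ∀ x y : V, G.dist x y = h →
    {z : V | G.dist x z = i ∧ G.dist y z = j}.ncard = p h i j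

/-- The Gaussian bracket `[i] = 1 + b + b² + ⋯ + b^{i-1}`. -/
def gaussBracket (b : ℝ) (i : ℕ) : ℝ := ∑ k ∈ Finset.range i, b ^ k

/-- A distance-regular graph with intersection numbers `p` has classical parameters
`(D, b, α, β)`: `b ∉ {0, -1}`, `c_i = [i](1 + α[i-1])` and `b_i = ([D]-[i])(β - α[i])`
for `0 ≤ i ≤ D`, where `c_i = p^i_{1,i-1}` and `b_i = p^i_{1,i+1}`. -/
def HasClassicalParams (D : ℕ) (p : ℕ → ℕ → ℕ → ℕ) (b α β : ℝ) : Prop :=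
  b ≠ 0 ∧ b ≠ -1 ∧
    (∀ i ≤ D, (p i 1 (i - 1) : ℝ) = gaussBracket b i * (1 + α * gaussBracket b (i - 1))) ∧
    (∀ i ≤ D, (p i 1 (i + 1) : ℝ) =
      (gaussBracket b D - gaussBracket b i) * (β - α * gaussBracket b i))

/-- `B(x,y) = Γ₁(x) ∩ Γ_{∂(x,y)+1}(y)`. -/
def Bset (G : SimpleGraph V) (x y : V) : Set V :=
  {v | G.dist x v = 1 ∧ G.dist y v = G.dist x y + 1}

/-- `A(x,y) = Γ₁(x) ∩ Γ_{∂(x,y)}(y)`. -/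
def Aset (G : SimpleGraph V) (x y : V) : Set V :=
  {v | G.dist x v = 1 ∧ G.dist y v = G.dist x y}

/-- `C(x,y) = Γ₁(x) ∩ Γ_{∂(x,y)-1}(y)`. -/
def Cset (G : SimpleGraph V) (x y : V) : Set V :=
  {v | G.dist x v = 1 ∧ G.dist y v = G.dist x y - 1}

/-- `C = {z ∈ Γ₃(x) : B(x,z) = B(x,y)}`. -/
def Cclass (G : SimpleGraph V) (x y : V) : Set V :=
  {z | G.dist x z = 3 ∧ Bset G x z = Bset G x y}

/-- `Δ = [x, C] = {v : ∃ z ∈ C, ∂(x,v) + ∂(v,z) = ∂(x,z)}`. -/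
def Delta (G : SimpleGraph V) (x y : V) : Set V :=
  {v | ∃ z ∈ Cclass G x y, G.dist x v + G.dist v z = G.dist x z}

/-!
Put `r = b⁻¹`. On functions of the distance to a vertex the adjacency matrix `A` acts as a
three-term operator. For classical parameters it maps `r ^ i` into the span of `r ^ i` and `1`, and
with the multiplication by `r ^ i` it satisfies Terwilliger's tridiagonal relation. The matrix `W`
with entries `r ^ ∂(x,y)` therefore satisfies `W² ∈ span {W, J}`, and a positivity argument
transfers the relation to `A` and the diagonal matrices `E` formed from the rows of `W`. Writing
`A E Aⁱ - Aⁱ E A` as a commutator with `E` then gives the balanced set condition for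
`Γ₁(x) ∩ Γᵢ(y)`, `i ≤ 3`.

Integrality of the intersection numbers forces `b < -1`, so that `-1 < r < 0`. For such `r`, among
the powers `r ^ j` with `j ≥ m - 1` the power `r ^ m` is the smallest when `m` is odd and the
largest when `m` is even, so an equality between sums of powers of `r` pins down all the distances
involved. In this way the balanced set condition excludes parallelograms of lengths `3` and `4`,
and makes `B(x,z)` constant as `z` runs through suitable neighborhoods in `Γ₂(x)` and `Γ₃(x)`.
Along such moves membership in `Δ` propagates.
-/

section Tridiagonal

variable {R : Type*} [Ring R] [Algebra ℝ R]

/-- The defect of Terwilliger's tridiagonal relation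
`[A, A²E - (s - 1)AEA + EA² - γ(AE + EA) - ϱE] = 0` between two elements of an algebra. It is used
both for matrices and for operators on functions `ℤ → ℝ`. -/
def tridiagonalDefect (s γ ϱ : ℝ) (A E : R) : R :=
  A ^ 3 * E - s • (A ^ 2 * E * A) + s • (A * E * A ^ 2) - E * A ^ 3
    - γ • (A ^ 2 * E - E * A ^ 2) - ϱ • (A * E - E * A)

/-- For a family `𝓔` (the dual adjacency matrices below), the space of those `N` for which
`AEN - NEA`, as a function of `E ∈ 𝓔`, is a commutator `[Q, E]` with fixed `Q`. -/
def balancedSubmodule (A : R) (𝓔 : Set R) : Submodule ℝ R where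
  carrier := {N | ∃ Q, ∀ E ∈ 𝓔, A * E * N - N * E * A = Q * E - E * Q}
  zero_mem' := ⟨0, by simp⟩
  add_mem' := by
    rintro M N ⟨P, hP⟩ ⟨Q, hQ⟩
    refine ⟨P + Q, fun E hE => ?_⟩
    simp only [mul_add, add_mul]
    rw [add_sub_add_comm, hP E hE, hQ E hE, add_sub_add_comm]
  smul_mem' := by
    rintro t N ⟨Q, hQ⟩
    refine ⟨t • Q, fun E hE => ?_⟩
    simp only [mul_smul_comm, smul_mul_assoc, ← smul_sub, hQ E hE]

variable {A : R} {𝓔 : Set R}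

lemma one_mem_balancedSubmodule : 1 ∈ balancedSubmodule A 𝓔 := ⟨A, by simp⟩

lemma self_mem_balancedSubmodule : A ∈ balancedSubmodule A 𝓔 := ⟨0, by simp⟩

lemma sandwich_sq_eq_commutator {s γ ϱ : ℝ} (hs : s ≠ 0) {E : R}
    (h : tridiagonalDefect s γ ϱ A E = 0) {P : R}
    (hP : P = -s⁻¹ • (A ^ 3 - γ • A ^ 2 - ϱ • A)) :
    A * E * A ^ 2 - A ^ 2 * E * A = P * E - E * P := by
  have hdefect : s • (A * E * A ^ 2 - A ^ 2 * E * A - (P * E - E * P)) = 0 := by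
    rw [← h, tridiagonalDefect, hP]
    simp only [sub_mul, mul_sub, smul_mul_assoc, mul_smul_comm]
    match_scalars <;> field_simp
  exact sub_eq_zero.1 ((smul_eq_zero_iff_right hs).1 hdefect)

-- With `Z = AEA² - A²EA = [P, E]`, the cubic sandwich is `AZ + ZA`; moving `P` past `E` in it
-- reproduces `s⁻¹` times the cubic sandwich itself, which is absorbed into the left-hand side.
lemma sandwich_cube_eq_commutator {s γ ϱ : ℝ} (hs : s ≠ 0) (hs1 : s ≠ 1) {E : R}
    (h : tridiagonalDefect s γ ϱ A E = 0) {P : R}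
    (hP : P = -s⁻¹ • (A ^ 3 - γ • A ^ 2 - ϱ • A)) {Q : R}
    (hQ : Q = (1 - s⁻¹)⁻¹ • (A * P - (s⁻¹ * γ) • P)) :
    A * E * A ^ 3 - A ^ 3 * E * A = Q * E - E * Q := by
  have hZ := sandwich_sq_eq_commutator hs h hP
  have hne : 1 - s⁻¹ ≠ 0 := sub_ne_zero.2 fun h1 => hs1 (inv_eq_one.1 h1.symm)
  have hcomm : A * P = P * A := by
    rw [hP]
    simp only [mul_sub, sub_mul, mul_smul_comm, smul_mul_assoc, ← pow_succ, ← pow_succ', ← sq]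
  have hX : A * E * A ^ 3 - A ^ 3 * E * A
      = A * P * E - E * (A * P) + (P * E * A - A * E * P) := by
    calc A * E * A ^ 3 - A ^ 3 * E * A
        = A * (A * E * A ^ 2 - A ^ 2 * E * A) + (A * E * A ^ 2 - A ^ 2 * E * A) * A := by
          noncomm_ring
      _ = A * P * E - E * (P * A) + (P * E * A - A * E * P) := by rw [hZ]; noncomm_ring
      _ = _ := by rw [hcomm]
  have hmove : P * E * A - A * E * P
      = s⁻¹ • (A * E * A ^ 3 - A ^ 3 * E * A) - (s⁻¹ * γ) • (P * E - E * P) := by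
    rw [← hZ, hP]
    simp only [sub_mul, mul_sub, smul_mul_assoc, mul_smul_comm]
    module
  have hscaled : (1 - s⁻¹) • (A * E * A ^ 3 - A ^ 3 * E * A)
      = (A * P - (s⁻¹ * γ) • P) * E - E * (A * P - (s⁻¹ * γ) • P) := by
    rw [hmove] at hX
    rw [sub_smul, one_smul, sub_eq_iff_eq_add, sub_mul, mul_sub, smul_mul_assoc, mul_smul_comm]
    refine hX.trans ?_
    module
  rw [hQ, smul_mul_assoc, mul_smul_comm, ← smul_sub, ← hscaled, inv_smul_smul₀ hne]

lemma pow_mem_balancedSubmodule {s γ ϱ : ℝ} (hs : s ≠ 0) (hs1 : s ≠ 1)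
    (h : ∀ E ∈ 𝓔, tridiagonalDefect s γ ϱ A E = 0) :
    A ^ 2 ∈ balancedSubmodule A 𝓔 ∧ A ^ 3 ∈ balancedSubmodule A 𝓔 :=
  ⟨⟨_, fun E hE => sandwich_sq_eq_commutator hs (h E hE) rfl⟩,
    ⟨_, fun E hE => sandwich_cube_eq_commutator hs hs1 (h E hE) rfl rfl⟩⟩

end Tridiagonal

section ThreeTerm

/-- The three-term operator `(Lφ)(i) = cᵢ φ(i-1) + aᵢ φ(i) + bᵢ φ(i+1)`: the action of the
adjacency matrix on functions of the distance to a vertex. Indexing by `ℤ` avoids boundary cases. -/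
def threeTerm (c a b : ℤ → ℝ) : Module.End ℝ (ℤ → ℝ) where
  toFun φ i := c i * φ (i - 1) + a i * φ i + b i * φ (i + 1)
  map_add' φ ψ := by ext i; simp only [Pi.add_apply]; ring
  map_smul' t φ := by ext i; simp only [Pi.smul_apply, smul_eq_mul, RingHom.id_apply]; ring

lemma threeTerm_apply (c a b φ : ℤ → ℝ) (i : ℤ) :
    threeTerm c a b φ i = c i * φ (i - 1) + a i * φ i + b i * φ (i + 1) := rfl

lemma threeTerm_single (c a b : ℤ → ℝ) (i : ℤ) :
    threeTerm c a b (Pi.single i 1)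
      = c (i + 1) • Pi.single (i + 1) 1 + a i • Pi.single i 1
        + b (i - 1) • Pi.single (i - 1) 1 := by
  ext j
  simp only [threeTerm_apply, Pi.add_apply, Pi.smul_apply, smul_eq_mul, Pi.single_apply]
  rcases eq_or_ne j (i + 1) with rfl | h₁
  · simp [show i + 1 + 1 ≠ i by omega, show i + 1 ≠ i - 1 by omega]
  rcases eq_or_ne j (i - 1) with rfl | h₂
  · simp [show i - 1 - 1 ≠ i by omega, show i - 1 ≠ i + 1 by omega]
  rcases eq_or_ne j i with rfl | h₃
  · simp [h₁, h₂]
  · simp [h₁, h₂, h₃, show j - 1 ≠ i by omega, show j + 1 ≠ i by omega]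

-- The hypotheses say that the coefficients of `φ (i ± 3)`, `φ (i ± 2)` and `φ (i ± 1)` vanish.
lemma tridiagonalDefect_threeTerm_eq_zero {c a b w : ℤ → ℝ} {s γ ϱ : ℝ}
    (h₃ : ∀ i, w (i + 3) - s * w (i + 2) + s * w (i + 1) - w i = 0)
    (h₂ : ∀ i, a i * (w (i + 2) - s * w (i + 1) + s * w i - w i) + a (i + 1) * (w (i + 2) - w i)
      + a (i + 2) * (w (i + 2) - s * w (i + 2) + s * w (i + 1) - w i)
      - γ * (w (i + 2) - w i) = 0)
    (h₁ : ∀ i, (a i ^ 2 + (1 - s) * a i * a (i + 1) + a (i + 1) ^ 2 - γ * (a i + a (i + 1)) - ϱ)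
        * (w (i + 1) - w i)
      + b i * c (i + 1) * (1 + s) * (w (i + 1) - w i)
      + b (i - 1) * c i * (w (i + 1) - s * w i + s * w (i - 1) - w i)
      + b (i + 1) * c (i + 2) * (w (i + 1) - s * w (i + 2) + s * w (i + 1) - w i) = 0) :
    tridiagonalDefect s γ ϱ (threeTerm c a b) (LinearMap.mulLeft ℝ w) = 0 := by
  ext φ i
  have h₃' := h₃ (i - 3)
  have h₂' := h₂ (i - 2)
  have h₁' := h₁ (i - 1)
  simp only [tridiagonalDefect, pow_succ, pow_zero, one_mul, LinearMap.sub_apply,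
    LinearMap.add_apply, LinearMap.smul_apply, Module.End.mul_apply, LinearMap.mulLeft_apply,
    threeTerm_apply, Pi.sub_apply, Pi.add_apply, Pi.smul_apply, Pi.mul_apply, smul_eq_mul,
    LinearMap.zero_apply, Pi.zero_apply]
  ring_nf at h₁' h₂' h₃' ⊢
  have e₁ := h₁ i
  have e₂ := h₂ i
  have e₃ := h₃ i
  ring_nf at e₁ e₂ e₃
  linear_combination b i * b (1 + i) * b (2 + i) * φ (3 + i) * e₃
    + b i * b (1 + i) * φ (2 + i) * e₂ + b i * φ (1 + i) * e₁
    - c i * φ (-1 + i) * h₁' - c i * c (-1 + i) * φ (-2 + i) * h₂'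
    - c i * c (-1 + i) * c (-2 + i) * φ (-3 + i) * h₃'

end ThreeTerm

section ClassicalParameters

/-- The Gaussian bracket `[i] = (bⁱ - 1) / (b - 1)` at an integer index, for `b ≠ 1`. -/
noncomputable def intBracket (b : ℝ) (i : ℤ) : ℝ := (b ^ i - 1) / (b - 1)

/-- `cᵢ` for classical parameters, extended to integer indices. -/
noncomputable def classicalC (b α : ℝ) (i : ℤ) : ℝ :=
  intBracket b i * (1 + α * intBracket b (i - 1))

/-- `bᵢ` for classical parameters, extended to integer indices; `U` stands for `[D]`. -/
noncomputable def classicalB (b α β U : ℝ) (i : ℤ) : ℝ :=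
  (U - intBracket b i) * (β - α * intBracket b i)

/-- `aᵢ = k - cᵢ - bᵢ` for classical parameters, extended to integer indices, where `k = [D]β`. -/
noncomputable def classicalA (b α β U : ℝ) (i : ℤ) : ℝ :=
  U * β - classicalC b α i - classicalB b α β U i

/-- The operator `threeTerm` for classical parameters `(D, b, α, β)` with `U = [D]`. -/
noncomputable def classicalThreeTerm (b α β U : ℝ) : Module.End ℝ (ℤ → ℝ) :=
  threeTerm (classicalC b α) (classicalA b α β U) (classicalB b α β U)

variable {b : ℝ}

lemma intBracket_natCast (hb1 : b ≠ 1) (n : ℕ) : intBracket b n = gaussBracket b n := by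
  rw [gaussBracket, geom_sum_eq hb1, intBracket, zpow_natCast]

lemma intBracket_add_one (hb0 : b ≠ 0) (hb1 : b ≠ 1) (i : ℤ) :
    intBracket b (i + 1) = 1 + b * intBracket b i := by
  have := sub_ne_zero.2 hb1
  rw [intBracket, intBracket, zpow_add_one₀ hb0]
  field_simp
  ring

lemma classicalC_natCast (hb1 : b ≠ 1) (α : ℝ) (n : ℕ) :
    classicalC b α n = gaussBracket b n * (1 + α * gaussBracket b (n - 1)) := by
  rw [classicalC, intBracket_natCast hb1]
  rcases n with _ | n
  · simp [gaussBracket]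
  · rw [Nat.cast_succ, add_sub_cancel_right, intBracket_natCast hb1, Nat.add_sub_cancel]

lemma inv_zpow_add_one (hb0 : b ≠ 0) (i : ℤ) : b⁻¹ ^ (i + 1) = b⁻¹ ^ i / b := by
  rw [zpow_add_one₀ (inv_ne_zero hb0), div_eq_mul_inv]

lemma inv_zpow_sub_one (hb0 : b ≠ 0) (i : ℤ) : b⁻¹ ^ (i - 1) = b * b⁻¹ ^ i := by
  rw [zpow_sub_one₀ (inv_ne_zero hb0), inv_inv, mul_comm]

lemma tridiagonalDefect_classicalThreeTerm (hb0 : b ≠ 0) (hb1 : b ≠ 1) (α β U : ℝ) :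
    ∃ γ ϱ, tridiagonalDefect (b + b⁻¹ + 1) γ ϱ (classicalThreeTerm b α β U)
      (LinearMap.mulLeft ℝ fun i => b⁻¹ ^ i) = 0 := by
  have hpow₂ (i : ℤ) : b⁻¹ ^ (i + 2) = b⁻¹ ^ i / b ^ 2 := by
    rw [← one_add_one_eq_two, ← add_assoc, inv_zpow_add_one hb0, inv_zpow_add_one hb0]
    field_simp
  have hpow₃ (i : ℤ) : b⁻¹ ^ (i + 3) = b⁻¹ ^ i / b ^ 3 := by
    rw [show i + 3 = i + 2 + 1 by ring, inv_zpow_add_one hb0, hpow₂]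
    field_simp
  have hbracket₂ (i : ℤ) : intBracket b (i + 2) = 1 + b * (1 + b * intBracket b i) := by
    rw [← intBracket_add_one hb0 hb1, ← intBracket_add_one hb0 hb1, add_assoc, one_add_one_eq_two]
  have hbracket' (i : ℤ) : intBracket b (i - 1) = (intBracket b i - 1) / b := by
    rw [eq_div_iff hb0, ← sub_add_cancel i 1, intBracket_add_one hb0 hb1]
    ring_nf
  have hindex (i : ℤ) : i + 2 - 1 = i + 1 := by ring
  -- `θ₀ = k` and `θ₁` are the eigenvalues of `A` on constants and (modulo constants) on `b⁻ⁱ`.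
  let θ₀ := U * β
  let θ₁ := (U - 1) * (β - α) / b - 1
  let γ := (2 * α + (b - 1) * (α * U + β - 1)) / b
  refine ⟨γ, θ₀ ^ 2 - (b + b⁻¹) * θ₀ * θ₁ + θ₁ ^ 2 - γ * (θ₀ + θ₁),
    tridiagonalDefect_threeTerm_eq_zero (fun i => ?_) (fun i => ?_) fun i => ?_⟩
  · simp only [inv_zpow_add_one hb0, hpow₂, hpow₃]
    field_simp
    ring
  · simp only [inv_zpow_add_one hb0, hpow₂, classicalA, classicalB, classicalC,
      add_sub_cancel_right, hindex, hbracket₂, intBracket_add_one hb0 hb1, hbracket', γ]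
    field_simp
    ring
  · simp only [inv_zpow_add_one hb0, inv_zpow_sub_one hb0, hpow₂, classicalA, classicalB,
      classicalC, add_sub_cancel_right, hindex, hbracket₂, intBracket_add_one hb0 hb1, hbracket',
      γ, θ₀, θ₁]
    field_simp
    ring

lemma classicalThreeTerm_inv_zpow (hb0 : b ≠ 0) (hb1 : b ≠ 1) (α β U : ℝ) :
    ∃ θ τ : ℝ, classicalThreeTerm b α β U (fun i => b⁻¹ ^ i)
      = θ • (fun i : ℤ => b⁻¹ ^ i) + τ • (1 : ℤ → ℝ) := by
  refine ⟨(U - 1) * (β - α) / b - 1, U * β / b - ((U - 1) * (β - α) / b - 1), ?_⟩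
  ext i
  have hb1' := sub_ne_zero.2 hb1
  have hz := zpow_ne_zero i hb0
  simp only [classicalThreeTerm, threeTerm_apply, classicalA, classicalB, classicalC, intBracket,
    inv_zpow_add_one hb0, inv_zpow_sub_one hb0, zpow_sub_one₀ hb0, Pi.add_apply, Pi.smul_apply,
    Pi.one_apply, smul_eq_mul]
  simp only [inv_zpow]
  field_simp
  ring

lemma classicalThreeTerm_one (b α β U : ℝ) : classicalThreeTerm b α β U 1 = (U * β) • 1 := by
  ext i
  simp only [classicalThreeTerm, threeTerm_apply, classicalA, Pi.smul_apply, Pi.one_apply,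
    smul_eq_mul]
  ring

end ClassicalParameters

section Sandwich

open scoped Matrix

variable {V K : Type*} [Fintype V] [DecidableEq V] [Fintype K]

lemma sum_mul_diagonal_mul_apply (G H : K → Matrix V V ℝ) (v : V → ℝ) (x y : V) :
    (∑ k, G k * Matrix.diagonal v * H k) x y = v ⬝ᵥ fun z => ∑ k, G k x z * H k z y := by
  simp only [Matrix.sum_apply, Matrix.mul_apply (M := G _ * _), Matrix.mul_diagonal, dotProduct,
    Finset.mul_sum]
  rw [Finset.sum_comm]
  exact Finset.sum_congr rfl fun z _ => Finset.sum_congr rfl fun k _ => by ring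

omit [DecidableEq V] in
lemma mulVec_dotProduct_mulVec_self {F : Matrix V V ℝ} {lam ρ : ℝ} (hF : F.IsSymm)
    (hFF : F * F = lam • F + ρ • Matrix.of fun _ _ => 1) {v : V → ℝ} (hv : ∑ z, v z = 0) :
    F *ᵥ v ⬝ᵥ F *ᵥ v = lam * (v ⬝ᵥ F *ᵥ v) := by
  have hJ : (Matrix.of fun _ _ : V => (1 : ℝ)) *ᵥ v = 0 := by
    ext z
    simp [Matrix.mulVec, dotProduct, hv]
  calc F *ᵥ v ⬝ᵥ F *ᵥ v = v ⬝ᵥ (F * F) *ᵥ v := by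
        rw [← Matrix.mulVec_mulVec, Matrix.dotProduct_mulVec v, ← Matrix.mulVec_transpose, hF.eq]
    _ = lam * (v ⬝ᵥ F *ᵥ v) := by
        rw [hFF, Matrix.add_mulVec, Matrix.smul_mulVec, Matrix.smul_mulVec, hJ, smul_zero,
          add_zero, dotProduct_smul, smul_eq_mul]

-- The `(x, y)` entries of the matrices in question, as `u` varies, form the vector `F *ᵥ W`, where
-- `W z = ∑ₖ Gₖ x z * Hₖ z y` sums to zero. The squared length of `F *ᵥ W` is therefore
-- `lam * (W ⬝ᵥ F *ᵥ W)`, and the sum of these over `y` vanishes by the last hypothesis.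
lemma sum_mul_diagonal_mul_eq_zero {G H : K → Matrix V V ℝ} {F : Matrix V V ℝ} {lam ρ : ℝ}
    (hF : F.IsSymm) (hFF : F * F = lam • F + ρ • Matrix.of fun _ _ => 1)
    (hGH : ∑ k, G k * H k = 0)
    (h : ∀ z k, (∑ j, G j * Matrix.diagonal (F z) * H j) *ᵥ H k z = 0) (u : V) :
    ∑ k, G k * Matrix.diagonal (F u) * H k = 0 := by
  set S : V → Matrix V V ℝ := fun u => ∑ k, G k * Matrix.diagonal (F u) * H k with hS
  let W (x y z : V) : ℝ := ∑ k, G k x z * H k z y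
  have hSW (x y : V) : (fun u => S u x y) = F *ᵥ W x y :=
    funext fun u => sum_mul_diagonal_mul_apply G H (F u) x y
  have hW (x y : V) : ∑ z, W x y z = 0 := by
    rw [← Matrix.zero_apply (α := ℝ) x y, ← hGH, Finset.sum_comm]
    simp only [Matrix.sum_apply, Matrix.mul_apply]
  have hnorm (x y : V) : ∑ u, S u x y ^ 2 = lam * ∑ z, W x y z * S z x y := by
    simpa only [← hSW, dotProduct, sq] using mulVec_dotProduct_mulVec_self hF hFF (hW x y)
  have hsum (x : V) : ∑ y, ∑ z, W x y z * S z x y = 0 := by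
    calc ∑ y, ∑ z, W x y z * S z x y = ∑ z, ∑ k, G k x z * (S z *ᵥ H k z) x := by
          rw [Finset.sum_comm]
          refine Finset.sum_congr rfl fun z _ => ?_
          simp only [W, Matrix.mulVec, dotProduct, Finset.mul_sum, Finset.sum_mul]
          rw [Finset.sum_comm]
          exact Finset.sum_congr rfl fun k _ => Finset.sum_congr rfl fun y _ => by ring
      _ = 0 := by simp only [hS, h, Pi.zero_apply, mul_zero, Finset.sum_const_zero]
  ext x y
  have hsq : ∑ y, ∑ u, S u x y ^ 2 = 0 := by
    simp only [hnorm, ← Finset.mul_sum, hsum, mul_zero]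
  have hrow := (Finset.sum_eq_zero_iff_of_nonneg fun y _ =>
    Finset.sum_nonneg fun u _ => sq_nonneg (S u x y)).1 hsq y (Finset.mem_univ y)
  exact pow_eq_zero_iff two_ne_zero |>.1 <|
    (Finset.sum_eq_zero_iff_of_nonneg fun u _ => sq_nonneg (S u x y)).1 hrow u (Finset.mem_univ u)

end Sandwich

section Radial

open scoped Matrix

variable (G : SimpleGraph V)

/-- The matrix whose `(x, y)` entry is `φ` of the distance from `x` to `y`. The domain of `φ` is
`ℤ`, as for `threeTerm`. -/
noncomputable def radial (φ : ℤ → ℝ) : Matrix V V ℝ := Matrix.of fun x y => φ (G.dist x y)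

/-- The distance-`i` matrix of a graph; it is zero for negative `i`. -/
noncomputable def distMatrix (i : ℤ) : Matrix V V ℝ := radial G (Pi.single i 1)

variable {G}

lemma radial_apply (φ : ℤ → ℝ) (x y : V) : radial G φ x y = φ (G.dist x y) := rfl

lemma distMatrix_apply (i : ℤ) (x y : V) :
    distMatrix G i x y = if (G.dist x y : ℤ) = i then 1 else 0 := Pi.single_apply ..

lemma radial_isSymm (φ : ℤ → ℝ) : (radial G φ).IsSymm :=
  Matrix.IsSymm.ext fun _ _ => by rw [radial_apply, radial_apply, G.dist_comm]

lemma radial_add (φ ψ : ℤ → ℝ) : radial G (φ + ψ) = radial G φ + radial G ψ := rfl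

lemma radial_smul (t : ℝ) (φ : ℤ → ℝ) : radial G (t • φ) = t • radial G φ := rfl

lemma distMatrix_zero [DecidableEq V] (hconn : G.Connected) : distMatrix G 0 = 1 := by
  ext x y
  simp [distMatrix_apply, Matrix.one_apply, hconn.dist_eq_zero_iff]

lemma distMatrix_eq_zero_of_neg {i : ℤ} (hi : i < 0) : distMatrix G i = 0 := by
  ext x y
  rw [distMatrix_apply, if_neg (by omega), Matrix.zero_apply]

lemma radial_eq_sum_distMatrix {D : ℕ} (hD : ∀ x y, G.dist x y ≤ D) (φ : ℤ → ℝ) :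
    radial G φ = ∑ n ∈ Finset.range (D + 1), φ n • distMatrix G n := by
  ext x y
  simp [Matrix.sum_apply, distMatrix_apply, radial_apply, Nat.lt_succ_of_le (hD x y)]

variable [Fintype V] {L : Module.End ℝ (ℤ → ℝ)}

lemma distMatrix_one_mulVec_radial
    (hL : ∀ φ, distMatrix G 1 * radial G φ = radial G (L φ)) (φ : ℤ → ℝ) (u : V) :
    distMatrix G 1 *ᵥ radial G φ u = radial G (L φ) u := by
  ext x
  rw [(radial_isSymm (L φ)).apply, ← hL, Matrix.mul_apply]
  simp only [(radial_isSymm φ).apply, Matrix.mulVec, dotProduct]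

lemma distMatrix_one_pow_eq_radial [DecidableEq V] (hconn : G.Connected)
    (hL : ∀ φ, distMatrix G 1 * radial G φ = radial G (L φ)) (n : ℕ) :
    distMatrix G 1 ^ n = radial G ((L ^ n) (Pi.single 0 1)) := by
  induction n with
  | zero => exact (distMatrix_zero hconn).symm
  | succ n ih => rw [pow_succ', ih, hL, pow_succ', Module.End.mul_apply]

lemma diagonal_radial_mulVec_radial [DecidableEq V] (w φ : ℤ → ℝ) (u : V) :
    Matrix.diagonal (radial G w u) *ᵥ radial G φ u = radial G (w * φ) u := by
  ext x
  rw [Matrix.mulVec_diagonal]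
  rfl

end Radial

section BoseMesner

open scoped Matrix

variable [Fintype V] {G : SimpleGraph V}

lemma smul_distMatrix_add_one {c a b : ℤ → ℝ}
    (hL : ∀ φ, distMatrix G 1 * radial G φ = radial G (threeTerm c a b φ)) (n : ℤ) :
    c (n + 1) • distMatrix G (n + 1) = distMatrix G 1 * distMatrix G n
      - a n • distMatrix G n - b (n - 1) • distMatrix G (n - 1) := by
  have := hL (Pi.single n 1)
  rw [threeTerm_single, radial_add, radial_add, radial_smul, radial_smul, radial_smul] at this
  unfold distMatrix at this ⊢
  rw [this]
  abel

variable [DecidableEq V]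

lemma distMatrix_mem_span_pow (hconn : G.Connected) {c a b : ℤ → ℝ}
    (hL : ∀ φ, distMatrix G 1 * radial G φ = radial G (threeTerm c a b φ)) {n : ℕ}
    (hc : ∀ m : ℕ, 1 ≤ m → m ≤ n → c m ≠ 0) :
    distMatrix G n ∈ Submodule.span ℝ ((distMatrix G 1 ^ ·) '' Set.Iic n) := by
  set S : ℕ → Submodule ℝ (Matrix V V ℝ) :=
    fun n => Submodule.span ℝ ((distMatrix G 1 ^ ·) '' Set.Iic n)
  have hmono {m n : ℕ} (h : m ≤ n) : S m ≤ S n :=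
    Submodule.span_mono (Set.image_mono (Set.Iic_subset_Iic.2 h))
  have hmul {n : ℕ} {M : Matrix V V ℝ} (hM : M ∈ S n) : distMatrix G 1 * M ∈ S (n + 1) := by
    have : S n ≤ (S (n + 1)).comap (LinearMap.mulLeft ℝ (distMatrix G 1)) :=
      Submodule.span_le.2 <| Set.forall_mem_image.2 fun m hm =>
        Submodule.subset_span ⟨m + 1, Nat.succ_le_succ hm, pow_succ' ..⟩
    exact this hM
  suffices distMatrix G n ∈ S n ∧ distMatrix G (n - 1 : ℤ) ∈ S n from this.1
  induction n with
  | zero =>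
    refine ⟨?_, ?_⟩
    · rw [Nat.cast_zero, distMatrix_zero hconn]
      exact Submodule.subset_span ⟨0, Set.mem_Iic.2 le_rfl, pow_zero _⟩
    · rw [distMatrix_eq_zero_of_neg (by omega)]
      exact zero_mem _
  | succ n ih =>
    obtain ⟨hn, hn'⟩ := ih fun m h₁ h₂ => hc m h₁ (by omega)
    push_cast
    rw [add_sub_cancel_right]
    refine ⟨(Submodule.smul_mem_iff _ (hc (n + 1) (by omega) le_rfl)).1 ?_, hmono n.le_succ hn⟩
    push_cast
    rw [smul_distMatrix_add_one hL]
    exact sub_mem (sub_mem (hmul hn) (Submodule.smul_mem _ _ (hmono n.le_succ hn)))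
      (Submodule.smul_mem _ _ (hmono n.le_succ hn'))

lemma radial_mem_adjoin (hconn : G.Connected) {D : ℕ} (hD : ∀ x y, G.dist x y ≤ D)
    {c a b : ℤ → ℝ} (hL : ∀ φ, distMatrix G 1 * radial G φ = radial G (threeTerm c a b φ))
    (hc : ∀ m : ℕ, 1 ≤ m → m ≤ D → c m ≠ 0) (φ : ℤ → ℝ) :
    radial G φ ∈ Algebra.adjoin ℝ {distMatrix G 1} := by
  rw [radial_eq_sum_distMatrix hD]
  refine sum_mem fun n hn => Subalgebra.smul_mem _ ?_ _
  have hle : Submodule.span ℝ ((distMatrix G 1 ^ ·) '' Set.Iic n)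
      ≤ Subalgebra.toSubmodule (Algebra.adjoin ℝ {distMatrix G 1}) :=
    Submodule.span_le.2 <| Set.forall_mem_image.2 fun m _ =>
      Subalgebra.pow_mem _ (Algebra.self_mem_adjoin_singleton ℝ (distMatrix G 1)) m
  exact hle <| distMatrix_mem_span_pow hconn hL fun m h₁ h₂ =>
    hc m h₁ (h₂.trans (Nat.lt_succ_iff.1 (Finset.mem_range.1 hn)))

lemma radial_mul_self_of_eigenfunction {L : Module.End ℝ (ℤ → ℝ)}
    (hL : ∀ φ, distMatrix G 1 * radial G φ = radial G (L φ))
    {w : ℤ → ℝ} (hw : radial G w ∈ Algebra.adjoin ℝ {distMatrix G 1})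
    {θ τ κ : ℝ} (hLw : L w = θ • w + τ • 1) (hL1 : L 1 = κ • 1) :
    ∃ lam ρ : ℝ, radial G w * radial G w = lam • radial G w + ρ • radial G 1 := by
  let S : Submodule ℝ (Matrix V V ℝ) := Submodule.span ℝ {radial G w, radial G 1}
  have hwS : radial G w ∈ S := Submodule.subset_span (by simp)
  have h1S : radial G 1 ∈ S := Submodule.subset_span (by simp)
  have hA : S ≤ S.comap (LinearMap.mulLeft ℝ (distMatrix G 1)) := by
    refine Submodule.span_le.2 (Set.insert_subset ?_ (Set.singleton_subset_iff.2 ?_))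
    · rw [SetLike.mem_coe, Submodule.mem_comap, LinearMap.mulLeft_apply, hL, hLw]
      exact add_mem (S.smul_mem θ hwS) (S.smul_mem τ h1S)
    · rw [SetLike.mem_coe, Submodule.mem_comap, LinearMap.mulLeft_apply, hL, hL1]
      exact S.smul_mem κ h1S
  have hmul (M) (hM : M ∈ Algebra.adjoin ℝ {distMatrix G 1}) : ∀ N ∈ S, M * N ∈ S := by
    induction hM using Algebra.adjoin_induction with
    | mem M hM => rw [Set.mem_singleton_iff.1 hM]; exact fun N hN => hA hN
    | algebraMap t => exact fun N hN => by rw [← Algebra.smul_def]; exact S.smul_mem t hN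
    | add M M' _ _ ih ih' =>
      exact fun N hN => by rw [add_mul]; exact add_mem (ih N hN) (ih' N hN)
    | mul M M' _ _ ih ih' =>
      exact fun N hN => by rw [mul_assoc]; exact ih _ (ih' N hN)
  obtain ⟨lam, ρ, h⟩ := Submodule.mem_span_pair.1 (hmul _ hw _ hwS)
  exact ⟨lam, ρ, h.symm⟩

lemma tridiagonalDefect_diagonal_radial_eq_zero (hconn : G.Connected)
    {L : Module.End ℝ (ℤ → ℝ)} (hL : ∀ φ, distMatrix G 1 * radial G φ = radial G (L φ))
    {w : ℤ → ℝ} {s γ ϱ : ℝ} (hdefect : tridiagonalDefect s γ ϱ L (LinearMap.mulLeft ℝ w) = 0)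
    {lam ρ : ℝ} (hsq : radial G w * radial G w = lam • radial G w + ρ • radial G 1) (u : V) :
    tridiagonalDefect s γ ϱ (distMatrix G 1) (Matrix.diagonal (radial G w u)) = 0 := by
  set A := distMatrix G 1
  have hexpand (E : Matrix V V ℝ) : tridiagonalDefect s γ ϱ A E
      = ∑ k : Fin 4, ![A ^ 3 - γ • A ^ 2 - ϱ • A, ϱ • 1 - s • A ^ 2, γ • 1 + s • A, -1] k
          * E * A ^ (k : ℕ) := by
    simp only [tridiagonalDefect, Fin.sum_univ_four, Matrix.cons_val, Fin.coe_ofNat_eq_mod]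
    norm_num [sub_mul, add_mul]
    module
  have hvanish (z : V) (φ : ℤ → ℝ) :
      tridiagonalDefect s γ ϱ A (Matrix.diagonal (radial G w z)) *ᵥ radial G φ z = 0 := by
    have := congrArg (fun T => radial G (T φ) z) hdefect
    simp only [tridiagonalDefect, pow_succ, pow_zero, one_mul, Matrix.sub_mulVec,
      Matrix.add_mulVec, Matrix.smul_mulVec, ← Matrix.mulVec_mulVec,
      diagonal_radial_mulVec_radial, distMatrix_one_mulVec_radial hL, A]
    exact this
  rw [hexpand]
  refine sum_mul_diagonal_mul_eq_zero (radial_isSymm w) hsq ?_ (fun z k => ?_) u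
  · simp only [Fin.sum_univ_four, Matrix.cons_val, Fin.coe_ofNat_eq_mod]
    norm_num [sub_mul, add_mul, ← pow_succ]
    noncomm_ring
  · rw [← hexpand, distMatrix_one_pow_eq_radial hconn hL, hvanish]

end BoseMesner

section Distance

variable {G : SimpleGraph V} {x y : V}

lemma dist_le_add_one_of_dist_eq_one (hconn : G.Connected) (h : G.dist x y = 1) (u : V) :
    G.dist u y ≤ G.dist u x + 1 ∧ G.dist u x ≤ G.dist u y + 1 := by
  have hy := hconn.dist_triangle (u := u) (v := x) (w := y)
  have hx := hconn.dist_triangle (u := u) (v := y) (w := x)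
  rw [G.dist_comm (u := y), h] at hx
  rw [h] at hy
  exact ⟨hy, hx⟩

lemma exists_dist_eq_and_dist_eq_one (hconn : G.Connected) {n : ℕ} (h : G.dist x y = n + 1) :
    ∃ z, G.dist x z = n ∧ G.dist y z = 1 := by
  obtain ⟨p, hp⟩ := hconn.exists_walk_length_eq_dist y x
  rw [G.dist_comm, h] at hp
  cases p with
  | nil => simp at hp
  | @cons _ z _ hyz q =>
    have hz : G.dist y z = 1 := SimpleGraph.dist_eq_one_iff_adj.2 hyz
    rw [SimpleGraph.Walk.length_cons] at hp
    have hle : G.dist z x ≤ n := Nat.add_right_cancel hp ▸ G.dist_le q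
    rw [G.dist_comm] at hle
    have := (dist_le_add_one_of_dist_eq_one hconn hz x).2
    exact ⟨z, by omega, hz⟩

lemma exists_dist_eq_of_le (hconn : G.Connected) {D n : ℕ} (hD : ∃ x y, G.dist x y = D)
    (hn : n ≤ D) : ∃ x y, G.dist x y = n := by
  induction D, hn using Nat.le_induction with
  | base => exact hD
  | succ D _ ih =>
    obtain ⟨x, y, h⟩ := hD
    obtain ⟨z, hz, -⟩ := exists_dist_eq_and_dist_eq_one hconn h
    exact ih ⟨x, z, hz⟩

end Distance

section Neighbors

open Finset

variable [Fintype V] (G : SimpleGraph V)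

/-- The neighbors of `x` at distance `j` from `y`: for `∂(x,y) = i` and `j = i - 1, i, i + 1` these
are the sets `C(x,y)`, `A(x,y)` and `B(x,y)`. -/
noncomputable def nbrs (x y : V) (j : ℕ) : Finset V := {z | G.dist x z = 1 ∧ G.dist y z = j}

/-- Terwilliger's balanced set condition for the sets `Γ₁(x) ∩ Γᵢ(y)` and `Γ₁(y) ∩ Γᵢ(x)`, with
`r = b⁻¹`: the vectors indexed by `u` with entries `r ^ ∂(u,x)` play the role of the representation
vectors of the vertices `x`, and `∑ z ∈ Γ₁(x) ∩ Γᵢ(y), E z - ∑ z ∈ Γ₁(y) ∩ Γᵢ(x), E z` is a multiple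
of `E x - E y`. The denominator `1 - r ^ ∂(x,y)` of the coefficient is cleared. -/
def IsBalanced (r : ℝ) (i : ℕ) : Prop :=
  ∀ x y u : V, (1 - r ^ G.dist x y) *
      (∑ z ∈ nbrs G x y i, r ^ G.dist u z - ∑ z ∈ nbrs G y x i, r ^ G.dist u z)
    = #(nbrs G x y i) * (r - r ^ i) * (r ^ G.dist u x - r ^ G.dist u y)

variable {G} {x y z : V} {j : ℕ}

lemma mem_nbrs : z ∈ nbrs G x y j ↔ G.dist x z = 1 ∧ G.dist y z = j := by
  simp [nbrs]

lemma isBalanced_of_mem_balancedSubmodule [DecidableEq V] {r : ℝ} {i : ℕ}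
    (hi : distMatrix G i ∈ balancedSubmodule (distMatrix G 1)
      (Set.range fun u => Matrix.diagonal (radial G (fun n => r ^ n) u)))
    (hcard : ∀ x y, #(nbrs G x y i) = #(nbrs G y x i)) : IsBalanced G r i := by
  obtain ⟨Q, hQ⟩ := hi
  have hsum (x y u : V) : ∑ z, distMatrix G 1 x z * r ^ G.dist u z * distMatrix G i z y
      = ∑ z ∈ nbrs G x y i, r ^ G.dist u z := by
    rw [nbrs, sum_filter]
    refine sum_congr rfl fun z _ => ?_
    simp only [distMatrix_apply, G.dist_comm (u := z), Nat.cast_eq_one, Nat.cast_inj, ite_and]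
    split_ifs <;> simp
  have hentry (x y u : V) :
      ∑ z ∈ nbrs G x y i, r ^ G.dist u z - ∑ z ∈ nbrs G y x i, r ^ G.dist u z
        = Q x y * (r ^ G.dist u y - r ^ G.dist u x) := by
    have := congrFun₂ (hQ _ ⟨u, rfl⟩) x y
    simp only [Matrix.sub_apply, Matrix.mul_apply (N := distMatrix G _), Matrix.mul_diagonal,
      Matrix.diagonal_mul, radial_apply, zpow_natCast] at this
    have hswap : ∑ z, distMatrix G i x z * r ^ G.dist u z * distMatrix G 1 z y
        = ∑ z ∈ nbrs G y x i, r ^ G.dist u z := by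
      rw [← hsum y x u]
      refine sum_congr rfl fun z _ => ?_
      simp only [distMatrix_apply, G.dist_comm (u := z)]
      ring
    rw [hsum, hswap] at this
    linear_combination this
  intro x y u
  have hx : #(nbrs G x y i) * (r - r ^ i) = Q x y * (r ^ G.dist x y - 1) := by
    have h := hentry x y x
    rw [sum_congr rfl fun z hz => by rw [(mem_nbrs.1 hz).1],
      sum_congr (s₁ := nbrs G y x i) rfl fun z hz => by rw [(mem_nbrs.1 hz).2],
      sum_const, sum_const, hcard y x, G.dist_self, pow_zero, nsmul_eq_mul, nsmul_eq_mul] at h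
    linear_combination h
  rw [hentry, hx]
  ring

lemma card_nbrs_mul (φ : ℤ → ℝ) (x y : V) (j : ℕ) : (#(nbrs G x y j) : ℝ) * φ j
    = ∑ z, if G.dist x z = 1 ∧ G.dist y z = j then φ (G.dist z y) else 0 := by
  rw [← sum_filter, ← nbrs, ← nsmul_eq_mul, ← sum_const]
  exact sum_congr rfl fun z hz => by rw [G.dist_comm, (mem_nbrs.1 hz).2]

lemma card_nbrs_dist_sub_one_mul (hconn : G.Connected) (φ : ℤ → ℝ) (x y : V) :
    (#(nbrs G x y (G.dist x y - 1)) : ℝ) * φ (G.dist x y - 1)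
      = ∑ z, if G.dist x z = 1 ∧ G.dist y z + 1 = G.dist x y then φ (G.dist z y) else 0 := by
  rcases h : G.dist x y with _ | m
  · obtain rfl := hconn.dist_eq_zero_iff.1 h
    have : nbrs G x x 0 = ∅ := by
      refine eq_empty_of_forall_notMem fun z hz => ?_
      have := mem_nbrs.1 hz
      omega
    simp [this]
  · simp only [Nat.add_sub_cancel, Nat.add_right_cancel_iff]
    push_cast
    rw [add_sub_cancel_right, card_nbrs_mul]

lemma distMatrix_one_mul_radial_apply (hconn : G.Connected) (φ : ℤ → ℝ) (x y : V) :
    (distMatrix G 1 * radial G φ) x y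
      = #(nbrs G x y (G.dist x y - 1)) * φ (G.dist x y - 1)
        + #(nbrs G x y (G.dist x y)) * φ (G.dist x y)
        + #(nbrs G x y (G.dist x y + 1)) * φ (G.dist x y + 1) := by
  have hsum : (distMatrix G 1 * radial G φ) x y
      = ∑ z, if G.dist x z = 1 then φ (G.dist z y) else 0 := by
    simp only [Matrix.mul_apply, distMatrix_apply, radial_apply, Nat.cast_eq_one, ite_mul,
      one_mul, zero_mul]
  have hsucc := card_nbrs_mul (G := G) φ x y (G.dist x y + 1)
  push_cast at hsucc
  rw [hsum, card_nbrs_dist_sub_one_mul hconn, card_nbrs_mul, hsucc, ← sum_add_distrib,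
    ← sum_add_distrib]
  refine sum_congr rfl fun z _ => ?_
  by_cases hz : G.dist x z = 1
  · simp only [hz, true_and, if_true]
    have hdist := dist_le_add_one_of_dist_eq_one hconn hz y
    rw [G.dist_comm (v := x)] at hdist
    obtain h | h | h : G.dist y z + 1 = G.dist x y ∨ G.dist y z = G.dist x y ∨
        G.dist y z = G.dist x y + 1 := by omega
    · rw [if_pos h, if_neg (by omega), if_neg (by omega), add_zero, add_zero]
    · rw [if_neg (by omega), if_pos h, if_neg (by omega), zero_add, add_zero]
    · rw [if_neg (by omega), if_neg (by omega), if_pos h, zero_add, zero_add]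
  · simp [hz]

end Neighbors

/-- A connected distance-regular graph of diameter `D` with intersection numbers `p` and classical
parameters `(D, b, α, β)`. -/
structure IsClassical (G : SimpleGraph V) (D : ℕ) (p : ℕ → ℕ → ℕ → ℕ) (b α β : ℝ) : Prop where
  connected : G.Connected
  dist_le : ∀ x y, G.dist x y ≤ D
  exists_dist_eq : ∃ x y, G.dist x y = D
  isDistRegularWith : G.IsDistRegularWith D p
  hasClassicalParams : HasClassicalParams D p b α β

namespace IsClassical

open Finset

variable {G : SimpleGraph V} {D : ℕ} {p : ℕ → ℕ → ℕ → ℕ} {b α β : ℝ}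

lemma ne_zero (h : IsClassical G D p b α β) : b ≠ 0 := h.hasClassicalParams.1

lemma c_eq (h : IsClassical G D p b α β) {n : ℕ} (hn : n ≤ D) :
    (p n 1 (n - 1) : ℝ) = gaussBracket b n * (1 + α * gaussBracket b (n - 1)) :=
  h.hasClassicalParams.2.2.1 n hn

lemma b_eq (h : IsClassical G D p b α β) {n : ℕ} (hn : n ≤ D) :
    (p n 1 (n + 1) : ℝ) =
      (gaussBracket b D - gaussBracket b n) * (β - α * gaussBracket b n) :=
  h.hasClassicalParams.2.2.2 n hn

section

variable [Fintype V] {x y : V}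

lemma card_nbrs (h : IsClassical G D p b α β) (hD : 1 ≤ D) {j : ℕ} (hj : j ≤ D) :
    #(nbrs G x y j) = p (G.dist x y) 1 j := by
  rw [← h.isDistRegularWith _ 1 j (h.dist_le x y) hD hj x y rfl, ← Set.ncard_coe_finset]
  congr
  ext z
  exact mem_nbrs

lemma card_nbrs_dist_add_one (h : IsClassical G D p b α β) (hD : 1 ≤ D) (x y : V) :
    (#(nbrs G x y (G.dist x y + 1)) : ℝ) = (gaussBracket b D - gaussBracket b (G.dist x y))
      * (β - α * gaussBracket b (G.dist x y)) := by
  rcases (h.dist_le x y).lt_or_eq with hlt | heq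
  · rw [h.card_nbrs hD hlt, h.b_eq hlt.le]
  · have : nbrs G x y (G.dist x y + 1) = ∅ := eq_empty_of_forall_notMem fun z hz => by
      have := (mem_nbrs.1 hz).2
      have := h.dist_le y z
      omega
    rw [this, heq, sub_self, zero_mul, card_empty, Nat.cast_zero]

lemma card_nbrs_dist (h : IsClassical G D p b α β) (hD : 1 ≤ D) (x y : V) :
    (#(nbrs G x y (G.dist x y)) : ℝ) = gaussBracket b D * β
      - gaussBracket b (G.dist x y) * (1 + α * gaussBracket b (G.dist x y - 1))
      - (gaussBracket b D - gaussBracket b (G.dist x y))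
        * (β - α * gaussBracket b (G.dist x y)) := by
  have hval : (#(nbrs G x x 1) : ℝ) = gaussBracket b D * β := by
    simpa [gaussBracket] using h.card_nbrs_dist_add_one hD x x
  have hsum := distMatrix_one_mul_radial_apply h.connected 1 x y
  have hdeg : (distMatrix G 1 * radial G 1) x y = #(nbrs G x x 1) := by
    simp only [Matrix.mul_apply, distMatrix_apply, radial_apply, Pi.one_apply, mul_one,
      Nat.cast_eq_one, sum_boole, nbrs, and_self]
  have hle := h.dist_le x y
  simp only [Pi.one_apply, mul_one, hdeg, hval, h.card_nbrs_dist_add_one hD,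
    h.card_nbrs hD ((Nat.sub_le _ 1).trans hle), h.c_eq hle] at hsum
  linear_combination -hsum

end

lemma a_eq [Finite V] (h : IsClassical G D p b α β) (hD : 1 ≤ D) {n : ℕ} (hn : n ≤ D) :
    (p n 1 n : ℝ) = gaussBracket b D * β
      - gaussBracket b n * (1 + α * gaussBracket b (n - 1))
      - (gaussBracket b D - gaussBracket b n) * (β - α * gaussBracket b n) := by
  have := Fintype.ofFinite V
  obtain ⟨x, y, rfl⟩ := exists_dist_eq_of_le h.connected h.exists_dist_eq hn
  rw [← h.card_nbrs_dist hD, h.card_nbrs hD hn]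

lemma c_ne_zero [Finite V] (h : IsClassical G D p b α β) {n : ℕ} (hn1 : 1 ≤ n) (hn : n ≤ D) :
    p n 1 (n - 1) ≠ 0 := by
  have := Fintype.ofFinite V
  obtain ⟨n, rfl⟩ : ∃ m, n = m + 1 := ⟨n - 1, by omega⟩
  obtain ⟨y, x, hyx⟩ := exists_dist_eq_of_le h.connected h.exists_dist_eq hn
  obtain ⟨z, hz, hxz⟩ := exists_dist_eq_and_dist_eq_one h.connected hyx
  have hcard := h.card_nbrs (x := x) (y := y) (j := n) (by omega) (by omega)
  rw [G.dist_comm, hyx] at hcard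
  rw [Nat.add_sub_cancel, ← hcard]
  exact card_ne_zero_of_mem (mem_nbrs.2 ⟨hxz, hz⟩)

variable [Fintype V]

lemma distMatrix_one_mul_radial (h : IsClassical G D p b α β) (hD : 1 ≤ D) (hb : b ≠ 1)
    (φ : ℤ → ℝ) : distMatrix G 1 * radial G φ
      = radial G (classicalThreeTerm b α β (gaussBracket b D) φ) := by
  ext x y
  have hle := h.dist_le x y
  rw [distMatrix_one_mul_radial_apply h.connected, h.card_nbrs_dist_add_one hD,
    h.card_nbrs_dist hD, h.card_nbrs hD ((Nat.sub_le _ 1).trans hle), h.c_eq hle,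
    radial_apply, classicalThreeTerm, threeTerm_apply, classicalA, classicalB,
    classicalC_natCast hb, intBracket_natCast hb]

theorem isBalanced (h : IsClassical G D p b α β) (hb : b ≠ 1) {i : ℕ} (hi : i ≤ 3) (hD : 3 ≤ D) :
    IsBalanced G b⁻¹ i := by
  classical
  have hb0 := h.ne_zero
  have hL := h.distMatrix_one_mul_radial (by omega) hb
  have hc (m : ℕ) (h₁ : 1 ≤ m) (h₂ : m ≤ D) : classicalC b α m ≠ 0 := by
    rw [classicalC_natCast hb, ← h.c_eq h₂, Nat.cast_ne_zero]
    exact h.c_ne_zero h₁ h₂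
  obtain ⟨θ, τ, hw⟩ := classicalThreeTerm_inv_zpow hb0 hb α β (gaussBracket b D)
  obtain ⟨γ, ϱ, hdefect⟩ := tridiagonalDefect_classicalThreeTerm hb0 hb α β (gaussBracket b D)
  obtain ⟨lam, ρ, hsq⟩ := radial_mul_self_of_eigenfunction hL
    (radial_mem_adjoin h.connected h.dist_le hL hc fun i => b⁻¹ ^ i) hw
    (classicalThreeTerm_one b α β (gaussBracket b D))
  have hs0 : b + b⁻¹ + 1 ≠ 0 := fun h0 => by
    field_simp at h0
    nlinarith [sq_nonneg (b + 1)]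
  have hs1 : b + b⁻¹ + 1 ≠ 1 := fun h0 => by
    field_simp at h0
    nlinarith [sq_nonneg b]
  have hpow := pow_mem_balancedSubmodule hs0 hs1 <| Set.forall_mem_range.2 <|
    tridiagonalDefect_diagonal_radial_eq_zero h.connected hL hdefect hsq
  refine isBalanced_of_mem_balancedSubmodule ?_ fun x y => ?_
  · refine Submodule.span_le.2 (Set.forall_mem_image.2 fun m hm => ?_) <|
      distMatrix_mem_span_pow h.connected hL fun m h₁ h₂ => hc m h₁ (by omega)
    obtain hm : m ≤ 3 := (Set.mem_Iic.1 hm).trans hi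
    interval_cases m
    · exact pow_zero (distMatrix G 1) ▸ one_mem_balancedSubmodule
    · exact (pow_one (distMatrix G 1)).symm ▸ self_mem_balancedSubmodule
    · exact hpow.1
    · exact hpow.2
  · rw [h.card_nbrs (by omega) (by omega), h.card_nbrs (by omega) (by omega), G.dist_comm]

end IsClassical

section Integrality

lemma not_exists_int_mul_eq_two {t : ℝ} (ht : 1 < t) :
    ¬∃ m n : ℤ, m * t = 2 ∧ n * t = t ^ 2 - 1 := by
  rintro ⟨m, n, hm, hn⟩
  have hm0 : (0 : ℝ) < m := by nlinarith
  have hm2 : (m : ℝ) < 2 := by nlinarith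
  norm_cast at hm0 hm2
  obtain rfl : m = 1 := by omega
  obtain rfl : t = 2 := by simpa using hm
  have : (n : ℝ) * 2 = 3 := by linarith
  norm_cast at this
  omega

lemma lt_neg_one_of_intersection_numbers {b α : ℝ} {a₂ a₃ c₂ c₃ c₄ : ℕ} (hb0 : b ≠ 0)
    (hb1 : b ≠ -1) (hc₂ : (c₂ : ℝ) = (1 + b) * (1 + α))
    (hc₃ : (c₃ : ℝ) = (1 + b + b ^ 2) * (1 + α * (1 + b)))
    (hc₄ : (c₄ : ℝ) = (1 + b + b ^ 2 + b ^ 3) * (1 + α * (1 + b + b ^ 2)))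
    (ha₂ : (a₂ : ℝ) = -α * (1 + b) ^ 2) (ha₃ : (a₃ : ℝ) = -α * (1 + b + b ^ 2) * (1 + b) ^ 2)
    (hc₂0 : c₂ ≠ 0) (hc₄0 : c₄ ≠ 0) (ha₂0 : a₂ ≠ 0) : b < -1 := by
  by_contra hcon
  have hb : 0 < 1 + b := by linarith [lt_of_le_of_ne (not_lt.1 hcon) hb1.symm]
  have hc₂1 : (1 : ℝ) ≤ c₂ := by exact_mod_cast Nat.one_le_iff_ne_zero.2 hc₂0
  have ha₂1 : (0 : ℝ) < a₂ := by exact_mod_cast Nat.pos_of_ne_zero ha₂0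
  have hα : α < 0 := by
    rw [ha₂] at ha₂1
    nlinarith [pow_pos hb 2]
  rcases hb0.lt_or_gt with hneg | hpos
  · nlinarith
  have hpos₃ : 0 < 1 + α * (1 + b + b ^ 2) :=
    pos_of_mul_pos_right (hc₄ ▸ Nat.cast_pos.2 (Nat.pos_of_ne_zero hc₄0)) (by positivity)
  -- `a₂ (1 + b + b²) < (1 + b)² < 2 (1 + b + b²)`
  have ha₂2 : (a₂ : ℝ) < 2 := by
    have : (a₂ : ℝ) * (1 + b + b ^ 2) < 2 * (1 + b + b ^ 2) := by
      rw [ha₂]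
      nlinarith [mul_pos (pow_pos hb 2) hpos₃]
    exact lt_of_mul_lt_mul_right this (by positivity)
  norm_cast at ha₂1 ha₂2
  obtain rfl : a₂ = 1 := by omega
  rw [Nat.cast_one] at ha₂
  refine not_exists_int_mul_eq_two (t := 1 + b) (by linarith) ⟨a₃ - c₃ - c₂ + 1, c₂, ?_, ?_⟩
  · push_cast
    rw [ha₃, hc₃, hc₂]
    linear_combination (-(2 + b) * (1 + b + b ^ 2) - 1) * ha₂
  · rw [Int.cast_natCast, hc₂]
    linear_combination ha₂

theorem IsClassical.lt_neg_one [Finite V] {G : SimpleGraph V} {D : ℕ} {p : ℕ → ℕ → ℕ → ℕ}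
    {b α β : ℝ} (h : IsClassical G D p b α β) (hD : 4 ≤ D) (ha₁ : p 1 1 1 = 0)
    (ha₂ : p 2 1 2 ≠ 0) : b < -1 := by
  have h₀ : gaussBracket b 0 = 0 := by simp [gaussBracket]
  have h₁ : gaussBracket b 1 = 1 := by simp [gaussBracket]
  have h₂ : gaussBracket b 2 = 1 + b := by simp [gaussBracket, Finset.sum_range_succ]
  have h₃ : gaussBracket b 3 = 1 + b + b ^ 2 := by simp [gaussBracket, Finset.sum_range_succ]
  have h₄ : gaussBracket b 4 = 1 + b + b ^ 2 + b ^ 3 := by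
    simp [gaussBracket, Finset.sum_range_succ]
  have hβ := h.a_eq (n := 1) (by omega) (by omega)
  have ha₂eq := h.a_eq (n := 2) (by omega) (by omega)
  have ha₃eq := h.a_eq (n := 3) (by omega) (by omega)
  have hc₂ := h.c_eq (n := 2) (by omega)
  have hc₃ := h.c_eq (n := 3) (by omega)
  have hc₄ := h.c_eq (n := 4) hD
  norm_num [ha₁, h₀, h₁, h₂, h₃, h₄] at hβ ha₂eq ha₃eq hc₂ hc₃ hc₄
  exact lt_neg_one_of_intersection_numbers h.ne_zero h.hasClassicalParams.2.1 hc₂ hc₃ hc₄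
    (by linear_combination ha₂eq - (1 + b) * hβ)
    (by linear_combination ha₃eq - (1 + b + b ^ 2) * hβ)
    (h.c_ne_zero (n := 2) (by omega) (by omega)) (h.c_ne_zero (n := 4) (by omega) hD) ha₂

end Integrality

section NegativePowers

open Finset

variable {r : ℝ} {m k : ℕ}

lemma pow_le_pow_of_odd (hr : -1 < r) (hr0 : r < 0) (hm : Odd m) (h : m ≤ k + 1) :
    r ^ m ≤ r ^ k := by
  rcases k.even_or_odd with hk | hk
  · exact (hm.pow_nonpos hr0.le).trans (hk.pow_nonneg r)
  · have hmk : m ≤ k := by grind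
    rw [← neg_neg r, hm.neg_pow, hk.neg_pow]
    exact neg_le_neg (pow_le_pow_of_le_one (by linarith) (by linarith) hmk)

lemma pow_le_pow_of_even (hr : -1 < r) (hr0 : r < 0) (hm : Even m) (h : m ≤ k + 1) :
    r ^ k ≤ r ^ m := by
  rcases k.even_or_odd with hk | hk
  · have hmk : m ≤ k := by grind
    rw [← hm.neg_pow, ← hk.neg_pow]
    exact pow_le_pow_of_le_one (by linarith) (by linarith) hmk
  · exact (hk.pow_nonpos hr0.le).trans (hm.pow_nonneg r)

lemma pow_injective_of_neg_one_lt (hr : -1 < r) (hr0 : r < 0) :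
    Function.Injective fun n : ℕ => r ^ n := fun m k h => by
  refine pow_right_injective₀ (abs_pos.2 hr0.ne) (abs_lt.2 ⟨hr, by linarith⟩).ne ?_
  simpa only [abs_pow] using congrArg abs h

variable {ι : Type*} {S : Finset ι} {d : ι → ℕ}

lemma sum_pow_eq_card_mul (r : ℝ) (h : ∀ z ∈ S, d z = m) : ∑ z ∈ S, r ^ d z = #S * r ^ m := by
  rw [sum_congr rfl fun z hz => by rw [h z hz], sum_const, nsmul_eq_mul]

lemma card_mul_pow_le_sum_pow (hr : -1 < r) (hr0 : r < 0) (hm : Odd m)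
    (h : ∀ z ∈ S, m ≤ d z + 1) : #S * r ^ m ≤ ∑ z ∈ S, r ^ d z := by
  rw [← nsmul_eq_mul]
  exact card_nsmul_le_sum _ _ _ fun z hz => pow_le_pow_of_odd hr hr0 hm (h z hz)

lemma sum_pow_le_card_mul_pow (hr : -1 < r) (hr0 : r < 0) (hm : Even m)
    (h : ∀ z ∈ S, m ≤ d z + 1) : ∑ z ∈ S, r ^ d z ≤ #S * r ^ m := by
  rw [← nsmul_eq_mul]
  exact sum_le_card_nsmul _ _ _ fun z hz => pow_le_pow_of_even hr hr0 hm (h z hz)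

lemma eq_of_sum_pow_eq_card_mul (hr : -1 < r) (hr0 : r < 0) (h : ∀ z ∈ S, m ≤ d z + 1)
    (hsum : ∑ z ∈ S, r ^ d z = #S * r ^ m) : ∀ z ∈ S, d z = m := by
  rw [← nsmul_eq_mul, ← sum_const] at hsum
  rcases m.even_or_odd with hm | hm
  · exact fun z hz => pow_injective_of_neg_one_lt hr hr0 <| (sum_eq_sum_iff_of_le fun z hz =>
      pow_le_pow_of_even hr hr0 hm (h z hz)).1 hsum z hz
  · exact fun z hz => pow_injective_of_neg_one_lt hr hr0 <| ((sum_eq_sum_iff_of_le fun z hz =>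
      pow_le_pow_of_odd hr hr0 hm (h z hz)).1 hsum.symm z hz).symm

end NegativePowers

/-- The properties of a graph with classical parameters `(D, b, α, β)`, `b < -1`, `a₁ = 0` and
`a₂ ≠ 0` from which the structure of `Δ` is derived; here `r = b⁻¹`. -/
structure IsNegBalanced [Fintype V] (G : SimpleGraph V) (r : ℝ) : Prop where
  connected : G.Connected
  neg_one_lt : -1 < r
  neg : r < 0
  card_nbrs_congr : ∀ {x y x' y' : V} (j : ℕ), G.dist x y = G.dist x' y' →
    (nbrs G x y j).card = (nbrs G x' y' j).card
  nbrs_eq_empty : ∀ {x y : V}, G.dist x y = 1 → nbrs G x y 1 = ∅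
  nbrs_nonempty : ∀ {x y : V}, G.dist x y = 2 → (nbrs G x y 2).Nonempty
  isBalanced_two : IsBalanced G r 2
  isBalanced_three : IsBalanced G r 3

lemma IsClassical.isNegBalanced [Fintype V] {G : SimpleGraph V} {D : ℕ} {p : ℕ → ℕ → ℕ → ℕ}
    {b α β : ℝ} (h : IsClassical G D p b α β) (hD : 4 ≤ D) (ha₁ : p 1 1 1 = 0)
    (ha₂ : p 2 1 2 ≠ 0) : IsNegBalanced G b⁻¹ where
  connected := h.connected
  neg_one_lt := by
    have hb := h.lt_neg_one hD ha₁ ha₂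
    rw [← inv_neg_one]
    exact (inv_lt_inv_of_neg (by norm_num) (by linarith)).2 hb
  neg := inv_lt_zero.2 (by linarith [h.lt_neg_one hD ha₁ ha₂])
  card_nbrs_congr {x y x' y'} j hxy := by
    rcases le_or_gt j D with hj | hj
    · rw [h.card_nbrs (by omega) hj, h.card_nbrs (by omega) hj, hxy]
    · have hempty (x y : V) : nbrs G x y j = ∅ := Finset.eq_empty_of_forall_notMem fun z hz =>
        hj.not_ge ((mem_nbrs.1 hz).2 ▸ h.dist_le y z)
      rw [hempty, hempty]
  nbrs_eq_empty hxy := by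
    rw [← Finset.card_eq_zero, h.card_nbrs (by omega) (by omega), hxy, ha₁]
  nbrs_nonempty hxy := by
    rw [← Finset.card_ne_zero, h.card_nbrs (by omega) (by omega), hxy]
    exact ha₂
  isBalanced_two := h.isBalanced (by linarith [h.lt_neg_one hD ha₁ ha₂]) (by omega) (by omega)
  isBalanced_three := h.isBalanced (by linarith [h.lt_neg_one hD ha₁ ha₂]) le_rfl (by omega)

/-- A parallelogram of length `n`: a quadruple `xyzw` with `∂(x,y) = ∂(z,w) = 1`, `∂(x,w) = n` and
the three remaining distances equal to `n - 1`. -/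
structure IsParallelogram (G : SimpleGraph V) (n : ℕ) (x y z w : V) : Prop where
  dist_xy : G.dist x y = 1
  dist_zw : G.dist z w = 1
  dist_xw : G.dist x w = n
  dist_xz : G.dist x z + 1 = n
  dist_yz : G.dist y z + 1 = n
  dist_yw : G.dist y w + 1 = n

namespace IsNegBalanced

open Finset

variable [Fintype V] {G : SimpleGraph V} {r : ℝ} {x y z w s t u v : V}

section Basic

variable (H : IsNegBalanced G r)
include H

lemma dist_le_add_one (h : G.dist x y = 1) (u : V) :
    G.dist u y ≤ G.dist u x + 1 ∧ G.dist u x ≤ G.dist u y + 1 :=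
  dist_le_add_one_of_dist_eq_one H.connected h u

lemma dist_eq_two (hxy : G.dist x y = 1) (hyz : G.dist y z = 1) (hne : x ≠ z) :
    G.dist x z = 2 := by
  have hle := (H.dist_le_add_one hyz x).1
  have h₀ : G.dist x z ≠ 0 := H.connected.dist_eq_zero_iff.not.2 hne
  have h₁ : G.dist x z ≠ 1 := fun h => by
    have : z ∈ nbrs G x y 1 := mem_nbrs.2 ⟨h, hyz⟩
    simp [H.nbrs_eq_empty hxy] at this
  omega

lemma card_nbrs_comm (x y : V) (j : ℕ) : #(nbrs G y x j) = #(nbrs G x y j) :=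
  H.card_nbrs_congr j G.dist_comm

lemma balanced_of_dist_eq_two (h : G.dist x y = 2) (u : V) :
    (1 + r) * (∑ z ∈ nbrs G x y 2, r ^ G.dist u z - ∑ z ∈ nbrs G y x 2, r ^ G.dist u z)
      = #(nbrs G x y 2) * r * (r ^ G.dist u x - r ^ G.dist u y) := by
  have hbal := H.isBalanced_two x y u
  rw [h] at hbal
  refine mul_left_cancel₀ (sub_ne_zero.2 (H.neg.trans one_pos).ne') ?_
  linear_combination hbal

theorem not_isParallelogram {i : ℕ} (hi : i = 2 ∨ i = 3) : ¬IsParallelogram G (i + 1) x y z w := by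
  rintro ⟨hxy, hzw, hxw, hxz, hyz, hyw⟩
  have hbal : IsBalanced G r i := by
    rcases hi with rfl | rfl
    exacts [H.isBalanced_two, H.isBalanced_three]
  replace hbal := hbal x z w
  have hsum : ∑ g ∈ nbrs G z x i, r ^ G.dist w g = #(nbrs G x z i) * r ^ 2 := by
    rw [← H.card_nbrs_comm x z]
    refine sum_pow_eq_card_mul r fun g hg => ?_
    obtain ⟨hzg, hxg⟩ := mem_nbrs.1 hg
    exact H.dist_eq_two (G.dist_comm.trans hzw) hzg (by rintro rfl; omega)
  rw [hsum, G.dist_comm (u := w), G.dist_comm (u := w), hxw, hzw, Nat.add_right_cancel hxz] at hbal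
  have hne : 1 - r ^ i ≠ 0 := by
    rcases hi with rfl | rfl
    · nlinarith [H.neg, H.neg_one_lt]
    · nlinarith [H.neg, sq_nonneg r]
  have hle : ∀ g ∈ nbrs G x z i, i + 1 ≤ G.dist w g + 1 := fun g hg => by
    have := (H.dist_le_add_one (mem_nbrs.1 hg).1 w).2
    rwa [G.dist_comm (u := w), hxw] at this
  have hwy : G.dist w y = i + 1 := eq_of_sum_pow_eq_card_mul H.neg_one_lt H.neg hle
    (mul_left_cancel₀ hne (by linear_combination hbal)) y <|
      mem_nbrs.2 ⟨hxy, G.dist_comm.trans (Nat.add_right_cancel hyz)⟩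
  rw [G.dist_comm] at hwy
  omega

lemma mem_Bset_of_dist_eq_one {z' : V} (hi : G.dist x z = 2 ∨ G.dist x z = 3)
    (hz' : G.dist x z' = G.dist x z) (hzz' : G.dist z z' = 1) (ht : t ∈ Bset G x z) :
    t ∈ Bset G x z' := by
  obtain ⟨hxt, hzt⟩ := ht
  refine ⟨hxt, ?_⟩
  have hz't := (H.dist_le_add_one hxt z').1
  have htz' := (H.dist_le_add_one hzz' t).2
  by_contra hne
  refine H.not_isParallelogram (x := t) (y := x) (z := z') (w := z) hi ⟨?_, ?_, ?_, ?_, ?_, ?_⟩ <;>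
    grind [G.dist_comm]

theorem Bset_eq_of_dist_eq_one {z' : V} (hi : G.dist x z = 2 ∨ G.dist x z = 3)
    (hz' : G.dist x z' = G.dist x z) (hzz' : G.dist z z' = 1) : Bset G x z = Bset G x z' :=
  Set.Subset.antisymm (fun _ => H.mem_Bset_of_dist_eq_one hi hz' hzz') fun _ =>
    H.mem_Bset_of_dist_eq_one (hz' ▸ hi) hz'.symm (G.dist_comm.trans hzz')

lemma Bset_eq_of_subset (hy : G.dist x y = G.dist x z) (h : Bset G x y ⊆ Bset G x z) :
    Bset G x y = Bset G x z := by
  have hB (z : V) : Bset G x z = nbrs G x z (G.dist x z + 1) :=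
    Set.ext fun t => mem_nbrs.symm
  rw [hB, hB, coe_subset] at h
  rw [hB, hB, eq_of_subset_of_card_le h (by rw [hy, H.card_nbrs_congr _ hy])]

lemma Bset_subset_Bset (hvy : G.dist v y = 1) (hy : G.dist x y = G.dist x v + 1) :
    Bset G x y ⊆ Bset G x v := fun t ⟨hxt, hyt⟩ => by
  refine ⟨hxt, ?_⟩
  have := H.dist_le_add_one hxt v
  have := H.dist_le_add_one hvy t
  grind [G.dist_comm]

end Basic

section Middle

variable (H : IsNegBalanced G r)
include H

lemma dist_eq_four_of_mem_nbrs (hvw : G.dist v w = 2) (hv : G.dist x v = 2) (hw : G.dist x w = 4)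
    (hz : z ∈ nbrs G w v 2) : G.dist x z = 4 := by
  have hlow : ∀ z ∈ nbrs G v w 2, 3 ≤ G.dist x z + 1 := fun z hz => by
    have := H.connected.dist_triangle (u := x) (v := z) (w := w)
    rw [G.dist_comm (u := z), (mem_nbrs.1 hz).2] at this
    omega
  have hhigh : ∀ z ∈ nbrs G w v 2, 4 ≤ G.dist x z + 1 := fun z hz => by
    have := (H.dist_le_add_one (mem_nbrs.1 hz).1 x).2
    omega
  have hbal := H.balanced_of_dist_eq_two hvw x
  rw [hv, hw] at hbal
  have hdiff : ∑ z ∈ nbrs G v w 2, r ^ G.dist x z - ∑ z ∈ nbrs G w v 2, r ^ G.dist x z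
      = #(nbrs G v w 2) * r ^ 3 - #(nbrs G w v 2) * r ^ 4 := by
    refine mul_left_cancel₀ (by linarith [H.neg_one_lt] : 1 + r ≠ 0) ?_
    rw [hbal, H.card_nbrs_comm v w]
    ring
  exact eq_of_sum_pow_eq_card_mul H.neg_one_lt H.neg hhigh (by
    linarith [card_mul_pow_le_sum_pow H.neg_one_lt H.neg (by decide) hlow,
      sum_pow_le_card_mul_pow H.neg_one_lt H.neg (by decide) hhigh]) z hz

lemma dist_ne_four_of_mem_nbrs (hv : G.dist x v = 2) (hy : G.dist x y = 3) (hvy : G.dist v y = 2)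
    (hw : w ∈ nbrs G y v 2) : G.dist x w ≠ 4 := fun h => by
  obtain ⟨hyw, hvw⟩ := mem_nbrs.1 hw
  have := H.dist_eq_four_of_mem_nbrs hvw hv h
    (mem_nbrs.2 ⟨G.dist_comm.trans hyw, hvy⟩)
  omega

lemma dist_ne_two_of_mem_nbrs (hv : G.dist x v = 2) (hy : G.dist x y = 3) (hvy : G.dist v y = 2)
    (hz : z ∈ nbrs G v y 2) (hxz : G.dist x z = 3) (ht : t ∈ Bset G x y) : G.dist t z ≠ 2 := by
  intro htz
  obtain ⟨hvz, hyz⟩ := mem_nbrs.1 hz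
  obtain ⟨hxt, hyt⟩ := ht
  have hzy : G.dist z y = 2 := G.dist_comm.trans hyz
  have hty : G.dist t y = 4 := by rw [G.dist_comm, hyt, hy]
  have hxw : ∀ w ∈ nbrs G y z 2, G.dist x w = 3 := fun w hw => by
    obtain ⟨hyw, hzw⟩ := mem_nbrs.1 hw
    have htw := H.dist_eq_four_of_mem_nbrs hzy htz hty hw
    have hne : G.dist x w ≠ 4 := fun hxw => by
      have hvw : G.dist v w ≠ 2 := fun hvw =>
        H.dist_ne_four_of_mem_nbrs hv hy hvy (mem_nbrs.2 ⟨hyw, hvw⟩) hxw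
      have hpar : ¬IsParallelogram G 3 v z y w := H.not_isParallelogram (Or.inl rfl)
      have := H.dist_le_add_one hvz w
      have := H.dist_le_add_one hyw v
      have := H.connected.dist_triangle (u := x) (v := v) (w := w)
      exact hpar ⟨hvz, hyw, by grind [G.dist_comm], by omega, by omega, by omega⟩
    have := H.dist_le_add_one hxt w
    have := H.dist_le_add_one hyw x
    grind [G.dist_comm]
  have hbal := H.balanced_of_dist_eq_two hzy x
  rw [hxz, hy, sub_self, mul_zero, sum_pow_eq_card_mul r hxw, H.card_nbrs_comm z y] at hbal
  have hxv := eq_of_sum_pow_eq_card_mul H.neg_one_lt H.neg (S := nbrs G z y 2) (m := 3)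
    (d := G.dist x) (fun w hw => by
      have := (H.dist_le_add_one (mem_nbrs.1 hw).1 x).2
      omega)
    (sub_eq_zero.1 ((mul_eq_zero.1 hbal).resolve_left (by linarith [H.neg_one_lt])))
    v (mem_nbrs.2 ⟨G.dist_comm.trans hvz, G.dist_comm.trans hvy⟩)
  omega

lemma dist_eq_add_one_of_mem_nbrs (hv : G.dist x v = 2) (hy : G.dist x y = 3)
    (hvy : G.dist v y = 2) (ht : t ∈ Bset G x y) (hw : w ∈ nbrs G y v 2) :
    G.dist t w = G.dist x w + 1 := by
  have hne := H.dist_ne_four_of_mem_nbrs hv hy hvy hw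
  obtain ⟨hyw, -⟩ := mem_nbrs.1 hw
  have hxw := H.dist_le_add_one hyw x
  obtain h | h : G.dist x w = 2 ∨ G.dist x w = 3 := by omega
  · have htw := H.dist_le_add_one hyw t
    have hwt := H.dist_le_add_one ht.1 w
    grind [G.dist_comm, ht.2]
  · rw [G.dist_comm]
    exact (H.mem_Bset_of_dist_eq_one (Or.inr hy) (h.trans hy.symm) hyw ht).2

lemma dist_eq_add_one_or_of_mem_nbrs (hv : G.dist x v = 2) (hy : G.dist x y = 3)
    (hvy : G.dist v y = 2) (ht : t ∈ Bset G x y) (htv : t ∈ Bset G x v) (hw : w ∈ nbrs G v y 2) :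
    G.dist t w = G.dist x w + 1 ∨ G.dist x w = 3 ∧ G.dist t w = 3 := by
  obtain ⟨hvw, -⟩ := mem_nbrs.1 hw
  have hxw := H.dist_le_add_one hvw x
  have htw := H.dist_le_add_one hvw t
  have hwt := H.dist_le_add_one ht.1 w
  have hvt := htv.2
  obtain h | h | h : G.dist x w = 1 ∨ G.dist x w = 2 ∨ G.dist x w = 3 := by omega
  · grind [G.dist_comm]
  · left
    rw [G.dist_comm]
    exact (H.mem_Bset_of_dist_eq_one (Or.inl hv) (h.trans hv.symm) hvw htv).2
  · have := H.dist_ne_two_of_mem_nbrs hv hy hvy hw h ht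
    grind [G.dist_comm]

-- The balanced set conditions of the pair `v, y` seen from `t` and from `x` differ by a factor `r`
-- on the right-hand side; comparing the left-hand sides term by term forces `∂(t,z) = ∂(x,z) + 1`.
theorem Bset_eq_of_mem_nbrs (hv : G.dist x v = 2) (hy : G.dist x y = 3) (hvy : G.dist v y = 2)
    (hB : Bset G x y ⊆ Bset G x v) (hz : z ∈ nbrs G v y 2) (hxz : G.dist x z = 3) :
    Bset G x y = Bset G x z := by
  refine H.Bset_eq_of_subset (hy.trans hxz.symm) fun t ht => ?_
  have htv := hB ht
  have hxbal := H.balanced_of_dist_eq_two hvy x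
  have htbal := H.balanced_of_dist_eq_two hvy t
  rw [hv, hy] at hxbal
  rw [G.dist_comm (v := v), G.dist_comm (v := y), htv.2, ht.2, hv, hy] at htbal
  have hyv : ∑ w ∈ nbrs G y v 2, r ^ G.dist t w = r * ∑ w ∈ nbrs G y v 2, r ^ G.dist x w := by
    rw [mul_sum]
    exact sum_congr rfl fun w hw => by
      rw [H.dist_eq_add_one_of_mem_nbrs hv hy hvy ht hw, pow_succ']
  have hvy_le : ∀ w ∈ nbrs G v y 2, r ^ G.dist t w ≤ r * r ^ G.dist x w := fun w hw => by
    rw [← pow_succ']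
    rcases H.dist_eq_add_one_or_of_mem_nbrs hv hy hvy ht htv hw with h | ⟨hxw, htw⟩
    · rw [h]
    · rw [hxw, htw]
      exact pow_le_pow_of_odd H.neg_one_lt H.neg (by decide) (by omega)
  have hvy_sum : ∑ w ∈ nbrs G v y 2, r ^ G.dist t w
      = ∑ w ∈ nbrs G v y 2, r * r ^ G.dist x w := by
    rw [← mul_sum]
    refine mul_left_cancel₀ (by linarith [H.neg_one_lt] : 1 + r ≠ 0) ?_
    linear_combination htbal - r * hxbal + (1 + r) * hyv
  have htz := (sum_eq_sum_iff_of_le hvy_le).1 hvy_sum z hz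
  rw [← pow_succ'] at htz
  exact ⟨ht.1, by rw [G.dist_comm, pow_injective_of_neg_one_lt H.neg_one_lt H.neg htz]⟩

end Middle

section DeltaMembership

omit [Fintype V] in
lemma mem_Delta_iff : v ∈ Delta G x y ↔ ∃ z ∈ Cclass G x y, G.dist x v + G.dist v z = 3 :=
  exists_congr fun _ => and_congr_right fun hz => by rw [hz.1]

omit [Fintype V] in
lemma mem_Delta_of_mem_Cclass (hz : z ∈ Cclass G x y) : z ∈ Delta G x y :=
  ⟨z, hz, by rw [G.dist_self, add_zero]⟩

variable (H : IsNegBalanced G r)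
include H

lemma mem_Cclass_of_mem_Delta (hv : v ∈ Delta G x y) (hxv : G.dist x v = 3) :
    v ∈ Cclass G x y := by
  obtain ⟨z, hz, hvz⟩ := mem_Delta_iff.1 hv
  obtain rfl : v = z := H.connected.dist_eq_zero_iff.1 (by omega)
  exact hz

lemma mem_Cclass_of_dist_eq_one (hz : z ∈ Cclass G x y) (hw : G.dist x w = 3)
    (hzw : G.dist z w = 1) : w ∈ Cclass G x y :=
  ⟨hw, (H.Bset_eq_of_dist_eq_one (Or.inr hz.1) (hw.trans hz.1.symm) hzw).symm.trans hz.2⟩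

lemma exists_mem_nbrs_dist_eq_three (hu : G.dist x u = 2) (hv : G.dist x v = 2)
    (huv : G.dist u v = 1) (huy : G.dist u y = 1) (hy : G.dist x y = 3) (hvy : G.dist v y = 2) :
    ∃ z ∈ nbrs G v y 2, G.dist x z = 3 := by
  by_contra! hcon
  have hvu : G.dist v u = 1 := G.dist_comm.trans huv
  have hxz : ∀ z ∈ nbrs G v y 2, G.dist x z = 2 := fun z hz => by
    obtain ⟨hvz, hyz⟩ := mem_nbrs.1 hz
    have hxz₃ := hcon z hz
    have hxz₁ : G.dist x z ≠ 1 := fun h => by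
      have huz : G.dist z u = 2 := H.dist_eq_two (G.dist_comm.trans hvz) hvu (by
        rintro rfl
        omega)
      have hpar : ¬IsParallelogram G 3 x z u y := H.not_isParallelogram (Or.inl rfl)
      exact hpar ⟨h, huy, hy, by omega, by omega, by rw [G.dist_comm, hyz]⟩
    have := H.dist_le_add_one hvz x
    omega
  have hle : ∀ z ∈ nbrs G y v 2, 2 ≤ G.dist x z + 1 := fun z hz => by
    have := H.dist_le_add_one (mem_nbrs.1 hz).1 x
    omega
  have hsum := sum_pow_le_card_mul_pow H.neg_one_lt H.neg (by decide) hle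
  have hbal := H.balanced_of_dist_eq_two hvy x
  rw [hv, hy, sum_pow_eq_card_mul r hxz] at hbal
  rw [H.card_nbrs_comm v y] at hsum
  have hcard : (0 : ℝ) < #(nbrs G v y 2) := by exact_mod_cast card_pos.2 (H.nbrs_nonempty hvy)
  have hpos : 0 ≤ #(nbrs G v y 2) * r * (r ^ 2 - r ^ 3) := by
    rw [← hbal]
    exact mul_nonneg (by linarith [H.neg_one_lt]) (sub_nonneg.2 hsum)
  have hneg : #(nbrs G v y 2) * r * (r ^ 2 - r ^ 3) < 0 :=
    mul_neg_of_neg_of_pos (mul_neg_of_pos_of_neg hcard H.neg) (by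
      nlinarith [H.neg, sq_nonneg r, pow_pos (neg_pos.2 H.neg) 2])
  exact hneg.not_ge hpos

theorem mem_Delta_of_dist_eq_one (huΔ : u ∈ Delta G x y) (hu : G.dist x u = 2)
    (hv : G.dist x v = 2) (huv : G.dist u v = 1) : v ∈ Delta G x y := by
  obtain ⟨c, hc, huc⟩ := mem_Delta_iff.1 huΔ
  replace huc : G.dist u c = 1 := by omega
  have hvc : G.dist v c = 2 := H.dist_eq_two (G.dist_comm.trans huv) huc (by
    rintro rfl
    have := hc.1
    omega)
  have hB : Bset G x c ⊆ Bset G x v :=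
    (H.Bset_subset_Bset huc (by rw [hc.1, hu])).trans
      (H.Bset_eq_of_dist_eq_one (Or.inl hu) (hv.trans hu.symm) huv).subset
  obtain ⟨z, hz, hxz⟩ := H.exists_mem_nbrs_dist_eq_three hu hv huv huc hc.1 hvc
  refine mem_Delta_iff.2 ⟨z, ⟨hxz, ?_⟩, by rw [hv, (mem_nbrs.1 hz).1]⟩
  rw [← H.Bset_eq_of_mem_nbrs hv hc.1 hvc hB hz hxz, hc.2]

lemma exists_dist_eq_of_dist_eq_three (hs : G.dist x s = 1) (hy : G.dist x y = 3)
    (hsy : G.dist s y = 3) : ∃ z, G.dist y z = 1 ∧ G.dist s z = 2 ∧ G.dist x z = 3 := by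
  by_contra! hcon
  have hnbrs : nbrs G y s 2 = nbrs G y x 2 := by
    refine eq_of_subset_of_card_le (fun z hz => ?_) <|
      (H.card_nbrs_congr 2 (by rw [G.dist_comm, hy, G.dist_comm, hsy])).le
    obtain ⟨hyz, hsz⟩ := mem_nbrs.1 hz
    have := H.dist_le_add_one hyz x
    have := H.connected.dist_triangle (u := x) (v := s) (w := z)
    have := hcon z hyz hsz
    exact mem_nbrs.2 ⟨hyz, by omega⟩
  have hbal := H.isBalanced_two x y s
  have hsum₁ : ∑ z ∈ nbrs G x y 2, r ^ G.dist s z = #(nbrs G x y 2) * r ^ 2 := by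
    refine sum_pow_eq_card_mul r fun z hz => ?_
    obtain ⟨hxz, hyz⟩ := mem_nbrs.1 hz
    exact H.dist_eq_two (G.dist_comm.trans hs) hxz (by
      rintro rfl
      rw [G.dist_comm] at hyz
      omega)
  have hsum₂ : ∑ z ∈ nbrs G y x 2, r ^ G.dist s z = #(nbrs G x y 2) * r ^ 2 := by
    rw [← H.card_nbrs_comm x y, ← hnbrs]
    exact sum_pow_eq_card_mul r fun z hz => (mem_nbrs.1 hz).2
  obtain ⟨w, hxw, hyw⟩ := exists_dist_eq_and_dist_eq_one H.connected (G.dist_comm.trans hy)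
  have hcard : (#(nbrs G x y 2) : ℝ) ≠ 0 :=
    Nat.cast_ne_zero.2 (card_ne_zero_of_mem (mem_nbrs.2 ⟨hyw, hxw⟩))
  rw [hsum₁, hsum₂, sub_self, mul_zero, G.dist_comm, hs, hsy] at hbal
  have hne (i j : ℕ) (hij : i ≠ j) : r ^ i - r ^ j ≠ 0 :=
    sub_ne_zero.2 ((pow_injective_of_neg_one_lt H.neg_one_lt H.neg).ne hij)
  refine mul_ne_zero (mul_ne_zero hcard ?_) (hne 1 3 (by decide)) hbal.symm
  simpa only [pow_one] using hne 1 2 (by decide)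

lemma mem_Delta_of_dist_le_three {c : V} (hs : G.dist x s = 1) (hc : c ∈ Cclass G x y)
    (hsc : G.dist s c ≤ 3) : s ∈ Delta G x y := by
  have hxc := hc.1
  have := H.connected.dist_triangle (u := x) (v := s) (w := c)
  obtain h | h : G.dist s c = 2 ∨ G.dist s c = 3 := by omega
  · exact mem_Delta_iff.2 ⟨c, hc, by omega⟩
  · obtain ⟨z, hcz, hsz, hxz⟩ := H.exists_dist_eq_of_dist_eq_three hs hxc h
    exact mem_Delta_iff.2 ⟨z, H.mem_Cclass_of_dist_eq_one hc hxz hcz, by omega⟩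

end DeltaMembership

section Step

variable {x₁ x₂ x₃ : V} (H : IsNegBalanced G r)
include H

lemma exists_common_neighbor_dist_eq_two (hxt : G.dist x t = 1) (hxu : G.dist x u = 2)
    (htu : G.dist t u = 2) (htv : G.dist t v = 1) (hxv : G.dist x v = 2) (huv : G.dist u v = 2) :
    ∃ w, G.dist x w = 2 ∧ G.dist u w = 1 ∧ G.dist w v = 1 := by
  by_contra! hcon
  have hnbrs : nbrs G v u 1 = nbrs G v x 1 := by
    refine eq_of_subset_of_card_le (fun w hw => ?_)
      (H.card_nbrs_congr 1 (by rw [G.dist_comm, hxv, G.dist_comm, huv])).le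
    obtain ⟨hvw, huw⟩ := mem_nbrs.1 hw
    have htw : G.dist t w = 2 := H.dist_eq_two htv hvw (by
      rintro rfl
      rw [G.dist_comm] at huw
      omega)
    have hpar : ¬IsParallelogram G 3 x t u w := H.not_isParallelogram (Or.inl rfl)
    have hxw₃ : G.dist x w ≠ 3 := fun h => hpar ⟨hxt, huw, h, by omega, by omega, by omega⟩
    have hxw₂ : G.dist x w ≠ 2 := fun h => hcon w h huw (G.dist_comm.trans hvw)
    have := H.dist_le_add_one hvw x
    exact mem_nbrs.2 ⟨hvw, by omega⟩
  have ht : t ∈ nbrs G v u 1 := by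
    rw [hnbrs]
    exact mem_nbrs.2 ⟨G.dist_comm.trans htv, hxt⟩
  have hut := (mem_nbrs.1 ht).2
  rw [G.dist_comm] at hut
  omega

lemma mem_Delta_of_dist_eq_two (huΔ : u ∈ Delta G x y) (hxt : G.dist x t = 1)
    (hxu : G.dist x u = 2) (htu : G.dist t u = 2) (htv : G.dist t v = 1) (hxv : G.dist x v = 2)
    (huv : G.dist u v = 2) : v ∈ Delta G x y := by
  obtain ⟨w, hxw, huw, hwv⟩ := H.exists_common_neighbor_dist_eq_two hxt hxu htu htv hxv huv
  exact H.mem_Delta_of_dist_eq_one (H.mem_Delta_of_dist_eq_one huΔ hxu hxw huw) hxw hxv hwv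

theorem mem_Delta_of_step_zero (hx₁ : G.dist x x₁ = 1) (hs : G.dist x s = 1)
    (hz : G.dist x₁ z = 1) (hsz : G.dist s z = 2) (hzΔ : z ∈ Delta G x y) : s ∈ Delta G x y := by
  have hxz : G.dist x z = 2 := H.dist_eq_two hx₁ hz (by
    rintro rfl
    rw [G.dist_comm] at hs
    omega)
  obtain ⟨c, hc, hzc⟩ := mem_Delta_iff.1 hzΔ
  have := H.connected.dist_triangle (u := s) (v := z) (w := c)
  exact H.mem_Delta_of_dist_le_three hs hc (by omega)

lemma mem_Delta_of_dist_eq_one_of_dist_eq_two (hx₁ : G.dist x x₁ = 1) (hx₁x₂ : G.dist x₁ x₂ = 1)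
    (hx₂ : G.dist x x₂ = 2) (hx₂Δ : x₂ ∈ Delta G x y) (hs : G.dist x₁ s = 1)
    (hxs : G.dist x s = 2) (hz : G.dist x₂ z = 1) (hsz : G.dist s z = 2) (hx₁z : G.dist x₁ z = 2)
    (hxz : G.dist x z = 1) : s ∈ Delta G x y := by
  have hx₁x : G.dist x₁ x = 1 := G.dist_comm.trans hx₁
  obtain ⟨u, hu⟩ := H.nbrs_nonempty (G.dist_comm.trans hx₂)
  obtain ⟨hx₂u, hxu⟩ := mem_nbrs.1 hu
  have huΔ := H.mem_Delta_of_dist_eq_one hx₂Δ hx₂ hxu hx₂u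
  have hx₁u : G.dist x₁ u = 2 := H.dist_eq_two hx₁x₂ hx₂u (by
    rintro rfl
    omega)
  have huz : G.dist u z = 2 := H.dist_eq_two (G.dist_comm.trans hx₂u) hz (by
    rintro rfl
    omega)
  have hus : G.dist u s ≠ 3 := fun h => by
    obtain ⟨w, hx₁w, huw, hwz⟩ :=
      H.exists_common_neighbor_dist_eq_two hx₁x hx₁u hxu hxz hx₁z huz
    have hB : Bset G x₁ u = Bset G x₁ z :=
      (H.Bset_eq_of_dist_eq_one (Or.inl hx₁u) (hx₁w.trans hx₁u.symm) huw).trans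
        (H.Bset_eq_of_dist_eq_one (Or.inl hx₁w) (hx₁z.trans hx₁w.symm) hwz)
    have hsB : s ∈ Bset G x₁ z := hB ▸ ⟨hs, by rw [h, hx₁u]⟩
    have hzs := hsB.2
    rw [G.dist_comm] at hzs
    omega
  have := (H.dist_le_add_one hs u).1
  rw [G.dist_comm (v := x₁), hx₁u] at this
  obtain h | h | h : G.dist u s = 0 ∨ G.dist u s = 1 ∨ G.dist u s = 2 := by omega
  · rwa [← H.connected.dist_eq_zero_iff.1 h]
  · exact H.mem_Delta_of_dist_eq_one huΔ hxu hxs h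
  · exact H.mem_Delta_of_dist_eq_two huΔ hx₁ hxu hx₁u hs hxs h

lemma mem_Delta_of_dist_eq_two_of_dist_eq_three (hx₁ : G.dist x x₁ = 1) (hs : G.dist x₁ s = 1)
    (hxs : G.dist x s = 2) (hsz : G.dist s z = 2) (hx₁z : G.dist x₁ z = 2) (hxz : G.dist x z = 3)
    (hzΔ : z ∈ Delta G x y) : s ∈ Delta G x y := by
  obtain ⟨w, hsw, hzw⟩ := exists_dist_eq_and_dist_eq_one H.connected hsz
  have hwz : G.dist w z = 1 := G.dist_comm.trans hzw
  have hpar : ¬IsParallelogram G 3 x x₁ w z := H.not_isParallelogram (Or.inl rfl)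
  have hxw₂ : G.dist x w ≠ 2 := fun h => by
    have hx₁w : G.dist x₁ w = 2 := H.dist_eq_two hs hsw (by
      rintro rfl
      omega)
    exact hpar ⟨hx₁, hwz, hxz, by omega, by omega, by omega⟩
  have := H.dist_le_add_one hwz x
  have := H.dist_le_add_one hsw x
  have hw := H.mem_Cclass_of_dist_eq_one (H.mem_Cclass_of_mem_Delta hzΔ hxz) (by omega) hzw
  exact mem_Delta_iff.2 ⟨w, hw, by omega⟩

theorem mem_Delta_of_step_one (hxΔ : x ∈ Delta G x y) (hx₁ : G.dist x x₁ = 1)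
    (hx₁x₂ : G.dist x₁ x₂ = 1) (hx₂ : G.dist x x₂ = 2) (hx₂Δ : x₂ ∈ Delta G x y)
    (hs : G.dist x₁ s = 1) (hz : G.dist x₂ z = 1) (hsz : G.dist s z = 2)
    (hzΔ : z ∈ Delta G x y) : s ∈ Delta G x y := by
  obtain rfl | hne := eq_or_ne x s
  · exact hxΔ
  have hxs : G.dist x s = 2 := H.dist_eq_two hx₁ hs hne
  have hx₁z : G.dist x₁ z = 2 := H.dist_eq_two hx₁x₂ hz (by
    rintro rfl
    rw [G.dist_comm] at hs
    omega)
  have := H.dist_le_add_one hz x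
  obtain h | h | h : G.dist x z = 1 ∨ G.dist x z = 2 ∨ G.dist x z = 3 := by omega
  · exact H.mem_Delta_of_dist_eq_one_of_dist_eq_two hx₁ hx₁x₂ hx₂ hx₂Δ hs hxs hz hsz hx₁z h
  · exact H.mem_Delta_of_dist_eq_two hzΔ hx₁ h hx₁z hs hxs (G.dist_comm.trans hsz)
  · exact H.mem_Delta_of_dist_eq_two_of_dist_eq_three hx₁ hs hxs hsz hx₁z h hzΔ

lemma Bset_subset_Bset_of_dist_eq_two (hxs : G.dist x s = 3) (hxz : G.dist x z = 2)
    (hsz : G.dist s z = 2) : Bset G x s ⊆ Bset G x z := by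
  obtain ⟨w, hsw, hzw⟩ := exists_dist_eq_and_dist_eq_one H.connected hsz
  have hws : G.dist w s = 1 := G.dist_comm.trans hsw
  have hwz : G.dist w z = 1 := G.dist_comm.trans hzw
  have := H.dist_le_add_one hsw x
  have := H.dist_le_add_one hzw x
  obtain h | h : G.dist x w = 2 ∨ G.dist x w = 3 := by omega
  · exact (H.Bset_subset_Bset hws (by omega)).trans
      (H.Bset_eq_of_dist_eq_one (Or.inl h) (hxz.trans h.symm) hwz).subset
  · exact (H.Bset_eq_of_dist_eq_one (Or.inr hxs) (h.trans hxs.symm) hsw).subset.trans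
      (H.Bset_subset_Bset hzw (by omega))

theorem mem_Delta_of_step_two (hx₂ : G.dist x x₂ = 2) (hx₂x₃ : G.dist x₂ x₃ = 1)
    (hx₂Δ : x₂ ∈ Delta G x y) (hx₃ : x₃ ∈ Cclass G x y) (hs : G.dist x₂ s = 1)
    (hz : G.dist x₃ z = 1) (hsz : G.dist s z = 2) (hzΔ : z ∈ Delta G x y) : s ∈ Delta G x y := by
  have hxx₃ := hx₃.1
  obtain rfl | hne := eq_or_ne s x₃
  · exact mem_Delta_of_mem_Cclass hx₃
  have hsx₃ : G.dist s x₃ = 2 := H.dist_eq_two (G.dist_comm.trans hs) hx₂x₃ hne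
  have hzs : G.dist z s = 2 := G.dist_comm.trans hsz
  have := H.dist_le_add_one hs x
  obtain h | h | h : G.dist x s = 1 ∨ G.dist x s = 2 ∨ G.dist x s = 3 := by omega
  · exact mem_Delta_iff.2 ⟨x₃, hx₃, by omega⟩
  · exact H.mem_Delta_of_dist_eq_one hx₂Δ hx₂ h hs
  suffices hB : Bset G x s = Bset G x y from mem_Delta_of_mem_Cclass ⟨h, hB⟩
  obtain ⟨c, -, hzc⟩ := mem_Delta_iff.1 hzΔ
  have := H.dist_le_add_one hz x
  obtain hxz | hxz : G.dist x z = 2 ∨ G.dist x z = 3 := by omega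
  · have hBsz := H.Bset_subset_Bset_of_dist_eq_two h hxz hsz
    rw [← hx₃.2]
    exact H.Bset_eq_of_mem_nbrs hxz h hzs hBsz (mem_nbrs.2 ⟨G.dist_comm.trans hz, hsx₃⟩) hxx₃
  · have hzC := H.mem_Cclass_of_mem_Delta hzΔ hxz
    have hx₂z : G.dist x₂ z = 2 := H.dist_eq_two hx₂x₃ hz (by
      rintro rfl
      omega)
    have hBzx₂ : Bset G x z ⊆ Bset G x x₂ := by
      rw [hzC.2, ← hx₃.2]
      exact H.Bset_subset_Bset hx₂x₃ (by omega)
    rw [← hzC.2]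
    exact (H.Bset_eq_of_mem_nbrs hx₂ hxz hx₂z hBzx₂ (mem_nbrs.2 ⟨hs, hzs⟩) h).symm

end Step

end IsNegBalanced

/-- Classical parameters `(D, b, α, β)`, `D ≥ 4`, `a₁ = 0`, `a₂ ≠ 0`,
`∂(x,y) = 3`, `Δ = [x, C]`. Let `x = x₀, x₁, x₂, x₃` be a sequence of vertices in `Δ`
with `∂(x, x_j) = j` and `∂(x_{j-1}, x_j) = 1` for `1 ≤ j ≤ 3`. Then for `0 ≤ i ≤ 2`,
if `s` is a neighbor of `x_i` with `s ∉ Δ` and `z ∈ A(x_{i+1}, s)` (i.e. `z` is a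
neighbor of `x_{i+1}` with `∂(s,z) = 2`), then `z ∉ Δ`. -/
theorem not_mem_Delta_step [Fintype V] (G : SimpleGraph V) (hconn : G.Connected)
    (D : ℕ) (hD : 4 ≤ D)
    (hdiam_le : ∀ x y : V, G.dist x y ≤ D) (hdiam : ∃ x y : V, G.dist x y = D)
    (p : ℕ → ℕ → ℕ → ℕ) (hdr : G.IsDistRegularWith D p)
    (b α β : ℝ) (hcp : HasClassicalParams D p b α β)
    (ha1 : p 1 1 1 = 0) (ha2 : p 2 1 2 ≠ 0)
    (x y : V) (hxy : G.dist x y = 3)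
    (xs : ℕ → V) (hxs0 : xs 0 = x)
    (hxsΔ : ∀ j ≤ 3, xs j ∈ Delta G x y)
    (hxsd : ∀ j ≤ 3, G.dist x (xs j) = j)
    (hxsadj : ∀ j, 1 ≤ j → j ≤ 3 → G.dist (xs (j - 1)) (xs j) = 1) :
    ∀ i ≤ 2, ∀ s : V, G.dist (xs i) s = 1 → s ∉ Delta G x y →
      ∀ z : V, G.dist (xs (i + 1)) z = 1 → G.dist s z = 2 → z ∉ Delta G x y := by
  intro i hi s hs hsΔ z hz hsz hzΔ
  refine hsΔ ?_
  have hG : IsClassical G D p b α β := ⟨hconn, hdiam_le, hdiam, hdr, hcp⟩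
  have H := hG.isNegBalanced hD ha1 ha2
  have hxΔ : x ∈ Delta G x y := hxs0 ▸ hxsΔ 0 (by decide)
  have hx₁ : G.dist x (xs 1) = 1 := hxsd 1 (by decide)
  have hx₂ : G.dist x (xs 2) = 2 := hxsd 2 (by decide)
  have hx₂Δ : xs 2 ∈ Delta G x y := hxsΔ 2 (by decide)
  have hx₁x₂ : G.dist (xs 1) (xs 2) = 1 := hxsadj 2 (by decide) (by decide)
  have hx₂x₃ : G.dist (xs 2) (xs 3) = 1 := hxsadj 3 (by decide) (by decide)
  have hx₃ : xs 3 ∈ Cclass G x y := H.mem_Cclass_of_mem_Delta (hxsΔ 3 le_rfl) (hxsd 3 le_rfl)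
  obtain rfl | rfl | rfl : i = 0 ∨ i = 1 ∨ i = 2 := by omega
  · exact H.mem_Delta_of_step_zero hx₁ (hxs0 ▸ hs) hz hsz hzΔ
  · exact H.mem_Delta_of_step_one hxΔ hx₁ hx₁x₂ hx₂ hx₂Δ hs hz hsz hzΔ
  · exact H.mem_Delta_of_step_two hx₂ hx₂x₃ hx₂Δ hx₃ hs hz hsz hzΔ
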